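/- For every ε > 0 there exist δ > 0 and N₀ such that the following holds for every N ≥ N₀. Let K be a properly edge-colored complete graph on N vertices in which every color appears on at least (1−δ)·N/2 and at most (1+δ)·N/2 edges. Let R be a random subset of the set of colors, obtained by including each color independently with probability 1/2. Then with probability at least 1−ε there is a collection 𝒞 of at most N·log₂ log₂ N / (log₂ N)² available cliques such that R is exactly the union over A ∈ 𝒞 of the color sets C(A), where an available clique is either a single edge whose color lies in R, or a set A of vertices all of whose internal edges have pairwise distinct colors all lying in R, and C(A) denotes the set of colors appearing on the edges inside A. -/

import Mathlib

/-- The set of colors appearing on edges inside a set `A` of vertices,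
for an edge-coloring `g`. -/
def cliqueColors {N : ℕ} {C : Type} (g : Fin N → Fin N → C)
    (A : Finset (Fin N)) : Set C :=
  {c | ∃ x ∈ A, ∃ y ∈ A, x ≠ y ∧ g x y = c}

/-!
Let `N` be the number of vertices and fix `k ≈ (48/25) log₂ N`. For each color `c`, count the
rainbow `k`-tuples of vertices whose first two entries span an edge of color `c` and all of whose
other colors lie in the random set `R`. The count concentrates around its mean in the second moment:
the variance is governed by pairs of tuples sharing colors, weighted by `2` to the number of shared
colors. The edges of the second tuple carrying shared colors form a graph on its `k` positions, and
along a rooted spanning forest of that graph each non-root vertex is determined, by properness, by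
its parent and a shared color. So a tuple with `j` non-root vertices has few choices and shares at
most `(j + 1).choose 2` colors, which makes the contribution of overlapping pairs negligible.

By Markov's inequality, with high probability all but `o(N / log² N)` colors of `R` lie in about
equally many available cliques. By averaging, some available clique covers at least a `θ`-fraction
of the good colors that remain, where `θ ≈ k² / (2 N)`, so about `N log₂ log₂ N / log₂² N` greedy
choices leave `O(N / log² N)` colors, which are covered by single edges.
-/

open Finset

section RandomSubsets

variable {C ι : Type*} [Fintype C] [DecidableEq C]

lemma card_filter_superset (S : Finset C) :
    (#{R : Finset C | S ⊆ R} : ℝ) = 2 ^ Fintype.card C / 2 ^ #S := by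
  have h : ({R : Finset C | S ⊆ R} : Finset (Finset C)) = Icc S univ := by ext R; simp
  rw [h, card_Icc_finset (subset_univ _), card_univ, Nat.cast_pow, Nat.cast_ofNat,
    pow_sub₀ _ two_ne_zero (card_le_univ S), div_eq_mul_inv]

variable (T : Finset ι) (S : ι → Finset C) {s : ℕ}

lemma sum_card_filter_subset (hs : ∀ b ∈ T, #(S b) = s) :
    ∑ R : Finset C, (#{b ∈ T | S b ⊆ R} : ℝ) = 2 ^ Fintype.card C * (#T / 2 ^ s) := by
  calc ∑ R : Finset C, (#{b ∈ T | S b ⊆ R} : ℝ)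
      = ∑ b ∈ T, (#{R : Finset C | S b ⊆ R} : ℝ) := by
        exact_mod_cast sum_card_bipartiteAbove_eq_sum_card_bipartiteBelow
          (s := (univ : Finset (Finset C))) (t := T) fun R b => S b ⊆ R
    _ = ∑ _b ∈ T, 2 ^ Fintype.card C / 2 ^ s :=
        sum_congr rfl fun b hb => by rw [card_filter_superset, hs b hb]
    _ = _ := by rw [sum_const, nsmul_eq_mul]; ring

lemma sum_sq_card_filter_subset (hs : ∀ b ∈ T, #(S b) = s) :
    ∑ R : Finset C, (#{b ∈ T | S b ⊆ R} : ℝ) ^ 2 =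
      2 ^ Fintype.card C / (2 ^ s) ^ 2 * ∑ b ∈ T, ∑ b' ∈ T, 2 ^ #(S b ∩ S b') := by
  calc ∑ R : Finset C, (#{b ∈ T | S b ⊆ R} : ℝ) ^ 2
      = ∑ R : Finset C, (#{p ∈ T ×ˢ T | S p.1 ∪ S p.2 ⊆ R} : ℝ) := by
        refine sum_congr rfl fun R _ => ?_
        simp only [union_subset_iff]
        rw [filter_product (fun b => S b ⊆ R) (fun b => S b ⊆ R), card_product, sq, Nat.cast_mul]
    _ = ∑ p ∈ T ×ˢ T, (#{R : Finset C | S p.1 ∪ S p.2 ⊆ R} : ℝ) := by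
        exact_mod_cast sum_card_bipartiteAbove_eq_sum_card_bipartiteBelow
          (s := (univ : Finset (Finset C))) (t := T ×ˢ T) fun R p => S p.1 ∪ S p.2 ⊆ R
    _ = ∑ p ∈ T ×ˢ T, 2 ^ Fintype.card C / (2 ^ s) ^ 2 * 2 ^ #(S p.1 ∩ S p.2) := by
        refine sum_congr rfl fun p hp => ?_
        obtain ⟨h₁, h₂⟩ := mem_product.1 hp
        have hcard : (2 : ℝ) ^ #(S p.1 ∪ S p.2) * 2 ^ #(S p.1 ∩ S p.2) = (2 ^ s) ^ 2 := by
          rw [← pow_add, card_union_add_card_inter, hs _ h₁, hs _ h₂, pow_add, sq]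
        rw [card_filter_superset, ← hcard]
        field_simp
    _ = _ := by rw [← mul_sum, sum_product]

lemma sum_sq_relative_deviation_le {ρ : ℝ} (hT : T.Nonempty) (hs : ∀ b ∈ T, #(S b) = s)
    (hoverlap : ∀ b ∈ T, ∑ b' ∈ T, (2 : ℝ) ^ #(S b ∩ S b') ≤ (1 + ρ) * #T) :
    ∑ R : Finset C, (#{b ∈ T | S b ⊆ R} / (#T / 2 ^ s) - 1 : ℝ) ^ 2 ≤
      2 ^ Fintype.card C * ρ := by
  have hTpos : (0 : ℝ) < #T := by exact_mod_cast hT.card_pos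
  set μ : ℝ := #T / 2 ^ s with hμ
  have hμpos : 0 < μ := by positivity
  have hsecond : ∑ R : Finset C, (#{b ∈ T | S b ⊆ R} : ℝ) ^ 2 ≤
      2 ^ Fintype.card C * (1 + ρ) * μ ^ 2 := by
    calc _ ≤ 2 ^ Fintype.card C / (2 ^ s) ^ 2 * ∑ _b ∈ T, (1 + ρ) * (#T : ℝ) := by
          rw [sum_sq_card_filter_subset T S hs]
          gcongr with b hb
          exact hoverlap b hb
      _ = _ := by rw [sum_const, nsmul_eq_mul, hμ]; ring
  calc _ = (∑ R : Finset C, (#{b ∈ T | S b ⊆ R} : ℝ) ^ 2) / μ ^ 2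
        - 2 / μ * ∑ R : Finset C, (#{b ∈ T | S b ⊆ R} : ℝ) + 2 ^ Fintype.card C := by
        have htotal : ∑ _R : Finset C, (1 : ℝ) = 2 ^ Fintype.card C := by simp
        rw [sum_div, mul_sum, ← htotal, ← sum_sub_distrib, ← sum_add_distrib]
        exact sum_congr rfl fun R _ => by ring
    _ ≤ 2 ^ Fintype.card C * (1 + ρ) - 2 / μ * (2 ^ Fintype.card C * μ)
        + 2 ^ Fintype.card C := by
        rw [sum_card_filter_subset T S hs]
        gcongr
        rwa [div_le_iff₀ (by positivity)]
    _ = _ := by field_simp; ring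

end RandomSubsets

section Markov

variable {β : Type*} [Fintype β]

lemma one_sub_mul_card_le_card_filter_le {Z : β → ℝ} (hZ : ∀ x, 0 ≤ Z x) {z ε : ℝ} (hz : 0 < z)
    (hsum : ∑ x, Z x ≤ Fintype.card β * (ε * z)) :
    (1 - ε) * Fintype.card β ≤ #{x | Z x ≤ z} := by
  have hbad : (#{x | ¬ Z x ≤ z} : ℝ) * z ≤ ε * Fintype.card β * z := by
    rw [← nsmul_eq_mul]
    calc _ ≤ ∑ x with ¬ Z x ≤ z, Z x :=
          card_nsmul_le_sum _ _ _ fun x hx => (not_le.1 (mem_filter.1 hx).2).le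
      _ ≤ ∑ x, Z x := sum_le_univ_sum_of_nonneg hZ
      _ ≤ Fintype.card β * (ε * z) := hsum
      _ = _ := by ring
  have hsplit : (#{x | Z x ≤ z} : ℝ) + #{x | ¬ Z x ≤ z} = Fintype.card β := by
    exact_mod_cast card_filter_add_card_filter_not (s := (univ : Finset β)) (Z · ≤ z)
  linarith [le_of_mul_le_mul_right hbad hz]

end Markov

section SpanningForest

variable {ι : Type*} {H : SimpleGraph ι}

lemma exists_component_roots (H : SimpleGraph ι) (u : ι) :
    ∃ r : ι → ι, r u = u ∧ (∀ j, H.Reachable j (r j)) ∧ ∀ i j, H.Adj i j → r i = r j := by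
  classical
  refine ⟨fun j => if H.Reachable u j then u else (H.connectedComponentMk j).out, by simp,
    fun j => ?_, fun i j hij => ?_⟩
  · dsimp only
    split_ifs with h
    · exact h.symm
    · exact (SimpleGraph.ConnectedComponent.exact (Quot.out_eq (H.connectedComponentMk j))).symm
  · have hreach : H.Reachable u i ↔ H.Reachable u j :=
      ⟨fun h => h.trans hij.reachable, fun h => h.trans hij.symm.reachable⟩
    have hcomp : H.connectedComponentMk i = H.connectedComponentMk j :=
      SimpleGraph.ConnectedComponent.sound hij.reachable
    simp only [hreach, hcomp]

lemma exists_adj_dist_lt {j v : ι} (h : H.Reachable j v) (hne : j ≠ v) :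
    ∃ i, H.Adj i j ∧ H.dist i v < H.dist j v := by
  obtain ⟨w, hw⟩ := h.exists_walk_length_eq_dist
  cases w with
  | nil => exact absurd rfl hne
  | cons hadj p =>
    refine ⟨_, hadj.symm, (SimpleGraph.dist_le p).trans_lt ?_⟩
    rw [← hw, SimpleGraph.Walk.length_cons]
    exact Nat.lt_succ_self _

lemma card_edgeFinset_le_of_roots [Fintype ι] [DecidableEq ι] [DecidableRel H.Adj] {r : ι → ι}
    (hr : ∀ i j, H.Adj i j → r i = r j) :
    #H.edgeFinset ≤ (#{j | r j ≠ j} + 1).choose 2 := by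
  set Q : Finset ι := {j | r j ≠ j} with hQ
  have hsub : H.edgeFinset ⊆ Q.offDiag.image Sym2.mk.uncurry ∪ Q.image fun j => s(r j, j) := by
    intro e
    induction e with | _ i j
    intro hij
    rw [SimpleGraph.mem_edgeFinset, SimpleGraph.mem_edgeSet] at hij
    have hroot := hr i j hij
    simp only [mem_union, mem_image, mem_offDiag, hQ, mem_filter, mem_univ, true_and]
    by_cases hi : r i = i
    · exact .inr ⟨j, by rw [← hroot, hi]; exact hij.ne, by rw [← hroot, hi]⟩
    by_cases hj : r j = j
    · exact .inr ⟨i, hi, by rw [hroot, hj, Sym2.eq_swap]⟩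
    · exact .inl ⟨(i, j), ⟨hi, hj, hij.ne⟩, rfl⟩
  calc #H.edgeFinset ≤ (#Q).choose 2 + #Q :=
        (card_le_card hsub).trans ((card_union_le _ _).trans
          (add_le_add (Sym2.card_image_offDiag Q).le card_image_le))
    _ = (#Q + 1).choose 2 := by rw [Nat.choose_succ_succ' (#Q) 1, Nat.choose_one_right, add_comm]

lemma exists_rooted_spanning_forest [Fintype ι] (H : SimpleGraph ι) [DecidableRel H.Adj]
    (u : ι) :
    ∃ (parent : ι → Option ι) (rank : ι → ℕ), parent u = none ∧
      (∀ v, H.Adj u v → parent v ≠ none) ∧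
      (∀ i j, parent j = some i → H.Adj i j ∧ rank i < rank j) ∧
      #H.edgeFinset ≤ (#{j | parent j ≠ none} + 1).choose 2 := by
  classical
  obtain ⟨r, hu, hreach, hr⟩ := exists_component_roots H u
  have hcloser : ∀ j, r j ≠ j → ∃ i, H.Adj i j ∧ H.dist i (r j) < H.dist j (r j) :=
    fun j hj => exists_adj_dist_lt (hreach j) hj.symm
  choose! p hadj hlt using hcloser
  refine ⟨fun j => if r j = j then none else some (p j), fun j => H.dist j (r j), if_pos hu,
    fun v huv => ?_, fun i j hij => ?_, ?_⟩
  · have hv : r v ≠ v := by rw [← hr u v huv, hu]; exact huv.ne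
    simp [hv]
  · obtain ⟨hj, rfl⟩ : r j ≠ j ∧ p j = i := by simpa [ite_eq_iff] using hij
    exact ⟨hadj j hj, by simpa only [hr _ _ (hadj j hj)] using hlt j hj⟩
  · simpa using card_edgeFinset_le_of_roots hr

end SpanningForest

section Colorings

variable {V C : Type*} [DecidableEq V]

/-- Properness of an edge-coloring of the complete graph on `V`. Colorings are encoded as functions
on `Sym2 V`, whose values on the diagonal are irrelevant. -/
def IsProperColoring (χ : Sym2 V → C) : Prop :=
  ∀ x y z, x ≠ y → x ≠ z → y ≠ z → χ s(x, y) ≠ χ s(x, z)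

/-- The edges of the complete graph on the vertex set `A`. -/
def cliqueEdges (A : Finset V) : Finset (Sym2 V) := A.offDiag.image Sym2.mk.uncurry

/-- The color set `C(A)` of the clique on `A`. -/
def colorFinset [DecidableEq C] (χ : Sym2 V → C) (A : Finset V) : Finset C :=
  (cliqueEdges A).image χ

/-- The edges inside `A` have pairwise distinct colors. -/
def IsRainbow (χ : Sym2 V → C) (A : Finset V) : Prop := Set.InjOn χ (cliqueEdges A)

/-- Available cliques for the set `R` of colors; two-element sets `A` are the available single
edges. -/
def IsAvailable [DecidableEq C] (χ : Sym2 V → C) (R : Finset C) (A : Finset V) : Prop :=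
  IsRainbow χ A ∧ colorFinset χ A ⊆ R

variable {χ : Sym2 V → C} {A : Finset V}

lemma mem_cliqueEdges {x y : V} : s(x, y) ∈ cliqueEdges A ↔ x ∈ A ∧ y ∈ A ∧ x ≠ y := by
  simp only [cliqueEdges, mem_image, mem_offDiag, Prod.exists, Function.uncurry_apply_pair,
    Sym2.eq_iff]
  constructor
  · rintro ⟨a, b, ⟨ha, hb, hab⟩, ⟨rfl, rfl⟩ | ⟨rfl, rfl⟩⟩
    exacts [⟨ha, hb, hab⟩, ⟨hb, ha, hab.symm⟩]
  · exact fun h => ⟨x, y, h, .inl ⟨rfl, rfl⟩⟩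

lemma cliqueEdges_insert (A : Finset V) {v : V} (hv : v ∉ A) :
    cliqueEdges (insert v A) = cliqueEdges A ∪ A.image fun x => s(x, v) := by
  ext e
  induction e with | _ x y
  simp only [mem_union, mem_cliqueEdges, mem_insert, mem_image, Sym2.eq_iff]
  grind

lemma card_cliqueEdges (A : Finset V) : #(cliqueEdges A) = (#A).choose 2 :=
  Sym2.card_image_offDiag A

lemma cliqueEdges_image {W : Type*} [DecidableEq W] (A : Finset V) {f : V → W}
    (hf : Function.Injective f) :
    cliqueEdges (A.image f) = (cliqueEdges A).image (Sym2.map f) := by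
  have hoffDiag : (A.image f).offDiag = A.offDiag.image (Prod.map f f) := by
    ext ⟨x, y⟩
    simp only [mem_offDiag, mem_image, Prod.exists, Prod.map_apply, Prod.mk.injEq]
    grind [hf.ne_iff]
  rw [cliqueEdges, cliqueEdges, hoffDiag, image_image, image_image]
  rfl

lemma mem_colorFinset [DecidableEq C] {c : C} :
    c ∈ colorFinset χ A ↔ ∃ x ∈ A, ∃ y ∈ A, x ≠ y ∧ χ s(x, y) = c := by
  simp [colorFinset, cliqueEdges, and_assoc]

lemma IsRainbow.card_colorFinset [DecidableEq C] (h : IsRainbow χ A) :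
    #(colorFinset χ A) = (#A).choose 2 := by
  rw [colorFinset, card_image_of_injOn h, card_cliqueEdges]

lemma IsRainbow.insert [DecidableEq C] (hA : IsRainbow χ A) (hχ : IsProperColoring χ) {v : V}
    (hv : v ∉ A) (hnew : ∀ x ∈ A, χ s(x, v) ∉ colorFinset χ A) : IsRainbow χ (insert v A) := by
  have hstar : Set.InjOn χ (A.image fun x => s(x, v) : Finset (Sym2 V)) := by
    intro e he e' he' hee'
    obtain ⟨x, hx, rfl⟩ := mem_image.1 he
    obtain ⟨y, hy, rfl⟩ := mem_image.1 he'
    by_contra hne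
    refine hχ v x y (ne_of_mem_of_not_mem hx hv).symm (ne_of_mem_of_not_mem hy hv).symm ?_ ?_
    · rintro rfl
      exact hne rfl
    · rwa [Sym2.eq_swap, Sym2.eq_swap (a := v)]
  have hcross : ∀ e ∈ cliqueEdges A, ∀ e' ∈ A.image fun x => s(x, v), χ e ≠ χ e' := by
    rintro e he e' he' heq
    obtain ⟨x, hx, rfl⟩ := mem_image.1 he'
    exact hnew x hx (heq ▸ mem_image_of_mem χ he)
  have hdisj : Disjoint (cliqueEdges A : Set (Sym2 V)) (A.image fun x => s(x, v) : Finset _) := by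
    rw [Set.disjoint_left]
    exact fun e he he' => hcross e he e he' rfl
  rw [IsRainbow, cliqueEdges_insert A hv, coe_union, Set.injOn_union hdisj]
  exact ⟨hA, hstar, hcross⟩

lemma isRainbow_pair (χ : Sym2 V → C) (x y : V) : IsRainbow χ {x, y} := by
  have hcard : #(cliqueEdges ({x, y} : Finset V)) ≤ 1 := by
    rw [card_cliqueEdges]
    exact (Nat.choose_le_choose 2 card_le_two).trans_eq (Nat.choose_self 2)
  exact fun e he e' he' _ => card_le_one.1 hcard e he e' he'

end Colorings

section CountingRainbowTuples

lemma image_univ_snoc {V : Type*} [DecidableEq V] {k : ℕ} (b : Fin k → V) (v : V) :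
    univ.image (Fin.snoc (α := fun _ => V) b v) = insert v (univ.image b) := by
  rw [← coe_inj]
  simp [Fin.range_snoc]

variable {V C : Type*} [Fintype V] [DecidableEq V] {χ : Sym2 V → C}

open scoped Classical in
/-- Ordered rainbow cliques on `k` vertices. -/
noncomputable def rainbowTuples (χ : Sym2 V → C) (k : ℕ) : Finset (Fin k → V) :=
  {b | Function.Injective b ∧ IsRainbow χ (univ.image b)}

lemma mem_rainbowTuples {k : ℕ} {b : Fin k → V} :
    b ∈ rainbowTuples χ k ↔ Function.Injective b ∧ IsRainbow χ (univ.image b) := by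
  simp [rainbowTuples]

variable [DecidableEq C]

/-- Ordered rainbow cliques on `m + 2` vertices whose first two vertices span an edge of
color `c`. -/
noncomputable def rainbowTuplesThrough (χ : Sym2 V → C) (m : ℕ) (c : C) :
    Finset (Fin (m + 2) → V) :=
  {b ∈ rainbowTuples χ (m + 2) | χ s(b 0, b 1) = c}

/-- The edges of color `c`, as ordered pairs of endpoints. -/
def colorPairs (χ : Sym2 V → C) (c : C) : Finset (V × V) := {p | p.1 ≠ p.2 ∧ χ s(p.1, p.2) = c}

lemma mem_rainbowTuplesThrough {m : ℕ} {c : C} {b : Fin (m + 2) → V} :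
    b ∈ rainbowTuplesThrough χ m c ↔ b ∈ rainbowTuples χ (m + 2) ∧ χ s(b 0, b 1) = c :=
  mem_filter

lemma mem_colorPairs {c : C} {p : V × V} :
    p ∈ colorPairs χ c ↔ p.1 ≠ p.2 ∧ χ s(p.1, p.2) = c := by
  simp [colorPairs]

lemma card_neighbors_color_mem_le (hχ : IsProperColoring χ) (x : V) (S : Finset C) :
    #{v | v ≠ x ∧ χ s(x, v) ∈ S} ≤ #S := by
  refine card_le_card_of_injOn (fun v => χ s(x, v)) (fun v hv => (mem_filter.1 hv).2.2) ?_
  intro v hv w hw hvw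
  by_contra hne
  exact hχ x v w (mem_filter.1 hv).2.1.symm (mem_filter.1 hw).2.1.symm hne hvw

lemma add_mul_choose_two_le_cube (k : ℕ) : k + k * k.choose 2 ≤ k ^ 3 := by
  cases k with
  | zero => simp
  | succ k =>
    have hchoose : (k + 1).choose 2 ≤ (k + 1) * k := by
      rw [Nat.choose_two_right]
      exact Nat.div_le_self _ _
    calc (k + 1) + (k + 1) * (k + 1).choose 2 ≤ (k + 1) + (k + 1) * ((k + 1) * k) := by gcongr
      _ ≤ (k + 1) ^ 3 := by nlinarith

open scoped Classical in
omit [DecidableEq C] in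
lemma card_sub_le_card_rainbow_extensions (hχ : IsProperColoring χ) {A : Finset V}
    (hA : IsRainbow χ A) :
    Fintype.card V - #A ^ 3 ≤ #{v | v ∉ A ∧ IsRainbow χ (insert v A)} := by
  set blocked : Finset V := A ∪ A.biUnion fun x => {v | v ≠ x ∧ χ s(x, v) ∈ colorFinset χ A}
  have hblocked : #blocked ≤ #A ^ 3 := by
    calc #blocked ≤ #A + #A * (#A).choose 2 := by
          refine (card_union_le _ _).trans (Nat.add_le_add_left (card_biUnion_le_card_mul _ _ _
            fun x _ => ?_) _)
          exact (card_neighbors_color_mem_le hχ x _).trans hA.card_colorFinset.le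
      _ ≤ #A ^ 3 := add_mul_choose_two_le_cube _
  calc Fintype.card V - #A ^ 3 ≤ #blockedᶜ := by rw [card_compl]; omega
    _ ≤ _ := by
      refine card_le_card fun v hv => ?_
      simp only [blocked, mem_compl, mem_union, mem_biUnion, mem_filter, mem_univ, true_and,
        not_or, not_exists, not_and] at hv ⊢
      exact ⟨hv.1, hA.insert hχ hv.1 fun x hx =>
        hv.2 x hx (ne_of_mem_of_not_mem hx hv.1).symm⟩

open scoped Classical in
lemma card_rainbowTuplesThrough_mul_le_succ (hχ : IsProperColoring χ) (m : ℕ) (c : C) :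
    #(rainbowTuplesThrough χ m c) * (Fintype.card V - (m + 2) ^ 3) ≤
      #(rainbowTuplesThrough χ (m + 1) c) := by
  let extensions (b : Fin (m + 2) → V) : Finset V :=
    {v | v ∉ univ.image b ∧ IsRainbow χ (insert v (univ.image b))}
  calc #(rainbowTuplesThrough χ m c) * (Fintype.card V - (m + 2) ^ 3)
      ≤ #((rainbowTuplesThrough χ m c).sigma extensions) := by
        rw [card_sigma, ← smul_eq_mul]
        refine card_nsmul_le_sum _ _ _ fun b hb => ?_
        obtain ⟨hinj, hrainbow⟩ := mem_rainbowTuples.1 (mem_rainbowTuplesThrough.1 hb).1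
        have hcard : #(univ.image b) = m + 2 := by
          rw [card_image_of_injective _ hinj, card_univ, Fintype.card_fin]
        exact hcard ▸ card_sub_le_card_rainbow_extensions hχ hrainbow
    _ ≤ #(rainbowTuplesThrough χ (m + 1) c) := by
        refine card_le_card_of_injOn (fun q => Fin.snoc (α := fun _ => V) q.1 q.2) ?_ ?_
        · rintro ⟨b, v⟩ hbv
          obtain ⟨hb, hv, hrainbow⟩ : b ∈ rainbowTuplesThrough χ m c ∧ v ∉ univ.image b ∧
            IsRainbow χ (insert v (univ.image b)) := by simpa [extensions] using hbv
          obtain ⟨hb, hc⟩ := mem_rainbowTuplesThrough.1 hb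
          refine mem_rainbowTuplesThrough.2 ⟨mem_rainbowTuples.2 ⟨?_, ?_⟩, ?_⟩
          · exact Fin.snoc_injective_iff.2 ⟨(mem_rainbowTuples.1 hb).1, by simpa using hv⟩
          · rwa [image_univ_snoc]
          · exact hc
        · rintro ⟨b, v⟩ - ⟨b', v'⟩ - h
          obtain ⟨rfl, rfl⟩ := Fin.snoc_injective2 h
          rfl

lemma card_colorPairs_mul_pow_le_card_rainbowTuplesThrough (hχ : IsProperColoring χ) (m : ℕ)
    (c : C) : #(colorPairs χ c) * (Fintype.card V - (m + 2) ^ 3) ^ m ≤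
      #(rainbowTuplesThrough χ m c) := by
  induction m with
  | zero =>
    rw [pow_zero, mul_one]
    refine card_le_card_of_injOn (fun p => ![p.1, p.2]) ?_ ?_
    · rintro ⟨x, y⟩ hxy
      obtain ⟨hne, hc⟩ := mem_colorPairs.1 hxy
      refine mem_rainbowTuplesThrough.2 ⟨mem_rainbowTuples.2 ⟨?_, ?_⟩, hc⟩
      · simpa [Function.Injective, Fin.forall_fin_two, eq_comm] using hne
      · have himage : univ.image ![x, y] = {x, y} := by
          ext v
          simp [Fin.exists_fin_two, eq_comm]
        rw [himage]
        exact isRainbow_pair χ x y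
    · rintro ⟨x, y⟩ - ⟨x', y'⟩ - h
      simpa using h
  | succ m ih =>
    calc #(colorPairs χ c) * (Fintype.card V - (m + 1 + 2) ^ 3) ^ (m + 1)
        ≤ #(colorPairs χ c) * (Fintype.card V - (m + 2) ^ 3) ^ m *
          (Fintype.card V - (m + 2) ^ 3) := by
          rw [mul_assoc, ← pow_succ]
          gcongr
          omega
      _ ≤ #(rainbowTuplesThrough χ m c) * (Fintype.card V - (m + 2) ^ 3) :=
          Nat.mul_le_mul_right _ ih
      _ ≤ _ := card_rainbowTuplesThrough_mul_le_succ hχ m c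

end CountingRainbowTuples

section ForestCodes

variable {V C : Type*} {χ : Sym2 V → C} {m : ℕ}

/-- A code of the tuple `b` relative to `b 0` and `b 1`: each further vertex `b j` is either given
outright, or by the index of an earlier vertex (with respect to some ranking) together with the
color of the edge joining the two. -/
def IsForestCode (χ : Sym2 V → C) (b : Fin (m + 2) → V) (φ : Fin m → V ⊕ (Fin (m + 2) × C)) :
    Prop :=
  ∃ rank : Fin (m + 2) → ℕ,
    (∀ j v, φ j = .inl v → b j.succ.succ = v) ∧
    ∀ j i c, φ j = .inr (i, c) → rank i < rank j.succ.succ ∧ χ s(b i, b j.succ.succ) = c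

lemma IsForestCode.eq {b b' : Fin (m + 2) → V} {φ : Fin m → V ⊕ (Fin (m + 2) × C)}
    (hχ : IsProperColoring χ) (hb : IsForestCode χ b φ) (hb' : IsForestCode χ b' φ)
    (hinj : Function.Injective b) (hinj' : Function.Injective b') (h0 : b 0 = b' 0)
    (h1 : b 1 = b' 1) : b = b' := by
  obtain ⟨rank, hroot, hchild⟩ := hb
  obtain ⟨rank', hroot', hchild'⟩ := hb'
  have hdetermined : ∀ k, (∀ i, rank i < rank k → b i = b' i) → b k = b' k := by
    intro k ih
    induction k using Fin.cases with
    | zero => exact h0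
    | succ k =>
      induction k using Fin.cases with
      | zero => exact h1
      | succ j =>
        rcases hφ : φ j with v | ⟨i, c⟩
        · rw [hroot j v hφ, hroot' j v hφ]
        · obtain ⟨hlt, hc⟩ := hchild j i c hφ
          obtain ⟨-, hc'⟩ := hchild' j i c hφ
          have hi : b i = b' i := ih i hlt
          have hij : i ≠ j.succ.succ := fun h => hlt.ne (congrArg rank h)
          by_contra hne
          refine hχ (b i) _ _ (hinj.ne hij) (hi ▸ hinj'.ne hij) hne ?_
          rw [hc, hi, hc']
  funext k
  induction hk : rank k using Nat.strong_induction_on generalizing k with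
  | _ r ih => exact hdetermined k fun i hi => ih (rank i) (hk ▸ hi) i rfl

/-- The symbols allowed in a code for tuples whose overlap with the color set `S` is encoded. -/
def forestAlphabet (V : Type*) [Fintype V] (m : ℕ) (S : Finset C) :
    Finset (V ⊕ (Fin (m + 2) × C)) :=
  univ.disjSum (univ ×ˢ S)

/-- The weight of a symbol: an index-color pair may account for up to `h` common colors. -/
def forestWeight (h : ℕ) (a : V ⊕ (Fin (m + 2) × C)) : ℝ := if a.isRight then 2 ^ h else 1

lemma sum_forestWeight [Fintype V] (h : ℕ) (S : Finset C) :
    ∑ a ∈ forestAlphabet V m S, forestWeight h a = Fintype.card V + (m + 2) * #S * 2 ^ h := by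
  simp [forestAlphabet, sum_disjSum, forestWeight]

lemma choose_two_le_mul_add_one {t h : ℕ} (hh : t + 3 ≤ 2 * h) : (t + 2).choose 2 ≤ h * t + 1 := by
  rw [Nat.choose_two_right]
  refine Nat.div_le_of_le_mul ?_
  simp only [show t + 2 - 1 = t + 1 by omega]
  nlinarith

lemma two_pow_card_inter_le_prod_forestWeight [DecidableEq C] {c : C} {S X : Finset C}
    (hS : c ∈ S) (hX : c ∈ X) {h : ℕ} (hh : m + 3 ≤ 2 * h) {φ : Fin m → V ⊕ (Fin (m + 2) × C)}
    (hφ : #(S ∩ X) ≤ (#{j | (φ j).isRight} + 2).choose 2) :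
    (2 : ℝ) ^ #(S.erase c ∩ X.erase c) ≤ ∏ j, forestWeight h (φ j) := by
  have ht : #{j | (φ j).isRight} ≤ m := (card_le_univ _).trans_eq (Fintype.card_fin m)
  have hcommon : #(S.erase c ∩ X.erase c) ≤ h * #{j | (φ j).isRight} := by
    rw [erase_inter, inter_erase, erase_idem, card_erase_of_mem (mem_inter.2 ⟨hS, hX⟩)]
    exact Nat.sub_le_of_le_add (hφ.trans (choose_two_le_mul_add_one (by omega)))
  calc (2 : ℝ) ^ #(S.erase c ∩ X.erase c) ≤ 2 ^ (h * #{j | (φ j).isRight}) :=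
        pow_le_pow_right₀ one_le_two hcommon
    _ = ∏ j, forestWeight h (φ j) := by
        simp [forestWeight, prod_ite, pow_mul]

variable [DecidableEq V] [DecidableEq C]

lemma card_inter_colorFinset_le_card_edgeFinset {ι : Type*} [Fintype ι] (b : ι → V)
    (S : Finset C) {H : SimpleGraph ι} [DecidableRel H.Adj]
    (hH : ∀ i j, i ≠ j → χ s(b i, b j) ∈ S → H.Adj i j) :
    #(S ∩ colorFinset χ (univ.image b)) ≤ #H.edgeFinset := by
  have hsub : S ∩ colorFinset χ (univ.image b) ⊆ H.edgeFinset.image fun e => χ (e.map b) := by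
    intro d hd
    obtain ⟨hdS, hd⟩ := mem_inter.1 hd
    obtain ⟨_, hx, _, hy, hne, rfl⟩ := mem_colorFinset.1 hd
    obtain ⟨i, -, rfl⟩ := mem_image.1 hx
    obtain ⟨j, -, rfl⟩ := mem_image.1 hy
    refine mem_image.2 ⟨s(i, j), ?_, rfl⟩
    rw [SimpleGraph.mem_edgeFinset, SimpleGraph.mem_edgeSet]
    exact hH i j (fun h => hne (congrArg b h)) hdS
  exact (card_le_card hsub).trans card_image_le

variable [Fintype V]

open scoped Classical in
lemma exists_isForestCode (b : Fin (m + 2) → V) {S : Finset C} (hS : χ s(b 0, b 1) ∈ S) :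
    ∃ φ : Fin m → V ⊕ (Fin (m + 2) × C), IsForestCode χ b φ ∧ (∀ j, φ j ∈ forestAlphabet V m S) ∧
      #(S ∩ colorFinset χ (univ.image b)) ≤ (#{j | (φ j).isRight} + 2).choose 2 := by
  let H : SimpleGraph (Fin (m + 2)) := .fromEdgeSet {e | χ (e.map b) ∈ S}
  obtain ⟨parent, rank, h0, h1, hparent, hcard⟩ := exists_rooted_spanning_forest H 0
  have hadj : ∀ i j, H.Adj i j ↔ χ s(b i, b j) ∈ S ∧ i ≠ j := fun i j => by simp [H]
  have hcolor : ∀ i j, parent j = some i → χ s(b i, b j) ∈ S :=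
    fun i j hij => ((hadj i j).1 (hparent i j hij).1).1
  have hone : parent 1 ≠ none := h1 1 ((hadj 0 1).2 ⟨hS, by simp⟩)
  let φ : Fin m → V ⊕ (Fin (m + 2) × C) := fun j =>
    (parent j.succ.succ).elim (.inl (b j.succ.succ)) fun i => .inr (i, χ s(b i, b j.succ.succ))
  refine ⟨φ, ⟨rank, fun j v hj => ?_, fun j i c hj => ?_⟩, fun j => ?_, ?_⟩
  · rcases hp : parent j.succ.succ with _ | i
    · simpa [φ, hp] using hj
    · simp [φ, hp] at hj
  · rcases hp : parent j.succ.succ with _ | k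
    · simp [φ, hp] at hj
    · obtain ⟨rfl, rfl⟩ : k = i ∧ χ s(b k, b j.succ.succ) = c := by simpa [φ, hp] using hj
      exact ⟨(hparent _ _ hp).2, rfl⟩
  · rcases hp : parent j.succ.succ with _ | i
    · simp [φ, hp, forestAlphabet]
    · simp [φ, hp, forestAlphabet, hcolor _ _ hp]
  · have hnonroots : #{j | parent j ≠ none} = #{j | (φ j).isRight} + 1 := by
      have hright : ∀ j, (φ j).isRight ↔ parent j.succ.succ ≠ none := fun j => by
        rcases hp : parent j.succ.succ with _ | i <;> simp [φ, hp]
      rw [card_filter, card_filter, Fin.sum_univ_succ, Fin.sum_univ_succ]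
      simp [h0, hone, hright, add_comm]
    rw [hnonroots] at hcard
    exact (card_inter_colorFinset_le_card_edgeFinset b S fun i j hij h =>
      (hadj i j).2 ⟨h, hij⟩).trans hcard

lemma sum_two_pow_card_inter_le (hχ : IsProperColoring χ) {c : C} {S : Finset C} (hS : c ∈ S)
    {h : ℕ} (hh : m + 3 ≤ 2 * h) :
    ∑ b ∈ rainbowTuplesThrough χ m c,
        (2 : ℝ) ^ #(S.erase c ∩ (colorFinset χ (univ.image b)).erase c) ≤
      #(colorPairs χ c) * (Fintype.card V + (m + 2) * #S * 2 ^ h) ^ m := by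
  classical
  have hcode : ∀ b ∈ rainbowTuplesThrough χ m c, ∃ φ : Fin m → V ⊕ (Fin (m + 2) × C),
      IsForestCode χ b φ ∧ (∀ j, φ j ∈ forestAlphabet V m S) ∧
      #(S ∩ colorFinset χ (univ.image b)) ≤ (#{j | (φ j).isRight} + 2).choose 2 :=
    fun b hb => exists_isForestCode b (by rwa [(mem_rainbowTuplesThrough.1 hb).2])
  have : Inhabited (V ⊕ (Fin (m + 2) × C)) := ⟨.inr (0, c)⟩
  choose! φ hφ hmem hcard using hcode
  have hinj : ∀ b ∈ rainbowTuplesThrough χ m c, Function.Injective b := fun b hb =>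
    (mem_rainbowTuples.1 (mem_rainbowTuplesThrough.1 hb).1).1
  have hfirst : ∀ b ∈ rainbowTuplesThrough χ m c, (b 0, b 1) ∈ colorPairs χ c := fun b hb =>
    mem_colorPairs.2 ⟨(hinj b hb).ne (by simp), (mem_rainbowTuplesThrough.1 hb).2⟩
  let encode (b : Fin (m + 2) → V) := ((b 0, b 1), φ b)
  have hencode : Set.InjOn encode (rainbowTuplesThrough χ m c : Set (Fin (m + 2) → V)) := by
    intro b hb b' hb' heq
    simp only [encode, Prod.mk.injEq] at heq
    obtain ⟨⟨h0, h1⟩, hφφ⟩ := heq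
    exact (hφ b hb).eq hχ (hφφ ▸ hφ b' hb') (hinj b hb) (hinj b' hb') h0 h1
  calc _ ≤ ∑ b ∈ rainbowTuplesThrough χ m c, ∏ j, forestWeight h ((encode b).2 j) := by
        refine sum_le_sum fun b hb => two_pow_card_inter_le_prod_forestWeight hS ?_ hh (hcard b hb)
        obtain ⟨hne, hc⟩ := mem_colorPairs.1 (hfirst b hb)
        exact mem_colorFinset.2 ⟨b 0, by simp, b 1, by simp, hne, hc⟩
    _ = ∑ q ∈ (rainbowTuplesThrough χ m c).image encode, ∏ j, forestWeight h (q.2 j) :=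
        (sum_image (f := fun q => ∏ j, forestWeight h (q.2 j)) hencode).symm
    _ ≤ ∑ q ∈ colorPairs χ c ×ˢ Fintype.piFinset fun _ => forestAlphabet V m S,
          ∏ j, forestWeight h (q.2 j) := by
        refine sum_le_sum_of_subset_of_nonneg (image_subset_iff.2 fun b hb => ?_) fun q _ _ => ?_
        · exact mem_product.2 ⟨hfirst b hb, Fintype.mem_piFinset.2 (hmem b hb)⟩
        · exact prod_nonneg fun j _ => by unfold forestWeight; positivity
    _ = _ := by
        simp only [sum_product, sum_const, nsmul_eq_mul, ← prod_univ_sum, sum_forestWeight,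
          prod_const, card_univ, Fintype.card_fin]

end ForestCodes

section SecondMoment

variable {V C : Type*} [Fintype V] [DecidableEq V] [DecidableEq C] {χ : Sym2 V → C} {m : ℕ}

/-- The rainbow tuples through the color `c` all of whose colors other than `c` lie in `R`. Whether
`c` itself lies in `R` is ignored, so that the expected number of these tuples is the same as
conditionally on `c ∈ R`. -/
noncomputable def availableTuplesThrough (χ : Sym2 V → C) (m : ℕ) (R : Finset C) (c : C) :
    Finset (Fin (m + 2) → V) :=
  {b ∈ rainbowTuplesThrough χ m c | (colorFinset χ (univ.image b)).erase c ⊆ R}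

/-- The expectation of `#(availableTuplesThrough χ m R c)` for a uniformly random `R`. -/
noncomputable def meanAvailable (χ : Sym2 V → C) (m : ℕ) (c : C) : ℝ :=
  #(rainbowTuplesThrough χ m c) / 2 ^ ((m + 2).choose 2 - 1)

/-- How far the number of available rainbow tuples through `c` is from its mean, relative to the
mean. -/
noncomputable def deviation (χ : Sym2 V → C) (m : ℕ) (R : Finset C) (c : C) : ℝ :=
  #(availableTuplesThrough χ m R c) / meanAvailable χ m c - 1

lemma card_availableTuplesThrough_eq {R : Finset C} {c : C} (hpos : 0 < meanAvailable χ m c) :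
    (#(availableTuplesThrough χ m R c) : ℝ) = meanAvailable χ m c * (1 + deviation χ m R c) := by
  rw [deviation, add_sub_cancel, mul_div_cancel₀ _ hpos.ne']

lemma card_colorFinset_of_mem_rainbowTuples {k : ℕ} {b : Fin k → V}
    (hb : b ∈ rainbowTuples χ k) : #(colorFinset χ (univ.image b)) = k.choose 2 := by
  obtain ⟨hinj, hrainbow⟩ := mem_rainbowTuples.1 hb
  rw [hrainbow.card_colorFinset, card_image_of_injective _ hinj, card_univ, Fintype.card_fin]

lemma mem_colorFinset_of_mem_rainbowTuplesThrough {c : C} {b : Fin (m + 2) → V}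
    (hb : b ∈ rainbowTuplesThrough χ m c) : c ∈ colorFinset χ (univ.image b) := by
  obtain ⟨hb, hc⟩ := mem_rainbowTuplesThrough.1 hb
  exact mem_colorFinset.2 ⟨b 0, by simp, b 1, by simp,
    (mem_rainbowTuples.1 hb).1.ne (by simp), hc⟩

lemma sum_sq_deviation_le [Fintype C] (hχ : IsProperColoring χ) {h : ℕ} (hh : m + 3 ≤ 2 * h)
    (hN : (m + 2) ^ 3 < Fintype.card V) {ρ : ℝ}
    (hρ : ((Fintype.card V : ℝ) + (m + 2) * (m + 2).choose 2 * 2 ^ h) ^ m ≤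
      (1 + ρ) * ((Fintype.card V - (m + 2) ^ 3 : ℕ) : ℝ) ^ m)
    {c : C} (hc : (colorPairs χ c).Nonempty) :
    ∑ R : Finset C, deviation χ m R c ^ 2 ≤ 2 ^ Fintype.card C * ρ := by
  have hlower := card_colorPairs_mul_pow_le_card_rainbowTuplesThrough hχ m c
  have hne : (rainbowTuplesThrough χ m c).Nonempty :=
    card_pos.1 ((Nat.mul_pos hc.card_pos (pow_pos (Nat.sub_pos_of_lt hN) m)).trans_le hlower)
  have hρ1 : 0 ≤ 1 + ρ := by
    have hpos : (0 : ℝ) < ((Fintype.card V - (m + 2) ^ 3 : ℕ) : ℝ) ^ m :=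
      pow_pos (by exact_mod_cast Nat.sub_pos_of_lt hN) m
    exact nonneg_of_mul_nonneg_left (le_trans (by positivity) hρ) hpos
  refine sum_sq_relative_deviation_le _ _ hne (fun b hb => ?_) fun b hb => ?_
  · rw [card_erase_of_mem (mem_colorFinset_of_mem_rainbowTuplesThrough hb),
      card_colorFinset_of_mem_rainbowTuples (mem_rainbowTuplesThrough.1 hb).1]
  · calc _ ≤ #(colorPairs χ c) * ((Fintype.card V : ℝ) +
          (m + 2) * #(colorFinset χ (univ.image b)) * 2 ^ h) ^ m :=
          sum_two_pow_card_inter_le hχ (mem_colorFinset_of_mem_rainbowTuplesThrough hb) hh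
      _ ≤ #(colorPairs χ c) * ((1 + ρ) * ((Fintype.card V - (m + 2) ^ 3 : ℕ) : ℝ) ^ m) := by
          rw [card_colorFinset_of_mem_rainbowTuples (mem_rainbowTuplesThrough.1 hb).1]
          gcongr
      _ = (1 + ρ) * (#(colorPairs χ c) * (Fintype.card V - (m + 2) ^ 3) ^ m : ℕ) := by
          push_cast
          ring
      _ ≤ (1 + ρ) * #(rainbowTuplesThrough χ m c) := by gcongr

lemma one_sub_mul_two_pow_le_card_small_deviation [Fintype C] [Nonempty C]
    (hχ : IsProperColoring χ) {h : ℕ} (hh : m + 3 ≤ 2 * h) (hN : (m + 2) ^ 3 < Fintype.card V)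
    {ρ ε : ℝ} (hρ0 : 0 < ρ) (hε : 0 < ε)
    (hρ : ((Fintype.card V : ℝ) + (m + 2) * (m + 2).choose 2 * 2 ^ h) ^ m ≤
      (1 + ρ) * ((Fintype.card V - (m + 2) ^ 3 : ℕ) : ℝ) ^ m)
    (hne : ∀ c, (colorPairs χ c).Nonempty) :
    (1 - ε) * 2 ^ Fintype.card C ≤
      #{R : Finset C | ∑ c, deviation χ m R c ^ 2 ≤ Fintype.card C * (ρ / ε)} := by
  have hcard : (Fintype.card (Finset C) : ℝ) = 2 ^ Fintype.card C := by simp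
  rw [← hcard]
  refine one_sub_mul_card_le_card_filter_le (fun R => sum_nonneg fun c _ => sq_nonneg _)
    (by positivity) ?_
  calc _ = ∑ c, ∑ R, deviation χ m R c ^ 2 := sum_comm
    _ ≤ ∑ _c : C, 2 ^ Fintype.card C * ρ :=
        sum_le_sum fun c _ => sum_sq_deviation_le hχ hh hN hρ (hne c)
    _ = _ := by
        rw [hcard, sum_const, card_univ, nsmul_eq_mul]
        field_simp

end SecondMoment

section Averaging

variable {V C : Type*} [Fintype V] [DecidableEq V] [DecidableEq C] {χ : Sym2 V → C} {m : ℕ}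
  {R U : Finset C}

/-- Ordered available cliques on `k` vertices. -/
noncomputable def availableTuples (χ : Sym2 V → C) (k : ℕ) (R : Finset C) : Finset (Fin k → V) :=
  {b ∈ rainbowTuples χ k | colorFinset χ (univ.image b) ⊆ R}

lemma mem_availableTuples {k : ℕ} {b : Fin k → V} :
    b ∈ availableTuples χ k R ↔ Function.Injective b ∧ IsAvailable χ R (univ.image b) := by
  rw [availableTuples, mem_filter, mem_rainbowTuples, IsAvailable, and_assoc]

lemma filter_availableTuples_eq_availableTuplesThrough {c : C} (hc : c ∈ R) :
    {b ∈ availableTuples χ (m + 2) R | χ s(b 0, b 1) = c} = availableTuplesThrough χ m R c := by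
  ext b
  simp only [availableTuples, availableTuplesThrough, rainbowTuplesThrough, mem_filter,
    subset_insert_iff.symm, insert_eq_self.2 hc]
  tauto

lemma card_availableTuples_le_sum :
    #(availableTuples χ (m + 2) R) ≤ ∑ c ∈ R, #(availableTuplesThrough χ m R c) := by
  rw [card_eq_sum_card_fiberwise (f := fun b => χ s(b 0, b 1)) (t := R)]
  · exact (sum_congr rfl fun c hc => by
      rw [filter_availableTuples_eq_availableTuplesThrough hc]).le
  · intro b hb
    obtain ⟨hinj, -, hsub⟩ := mem_availableTuples.1 hb
    exact hsub (mem_colorFinset.2 ⟨b 0, by simp, b 1, by simp, hinj.ne (by simp), rfl⟩)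

lemma card_mul_le_card_filter_mem (hU : U ⊆ R) {a : ℝ}
    (ha : ∀ c ∈ U, a ≤ #(availableTuplesThrough χ m R c)) :
    #U * a ≤ #{b ∈ availableTuples χ (m + 2) R | χ s(b 0, b 1) ∈ U} := by
  have hfiber : #{b ∈ availableTuples χ (m + 2) R | χ s(b 0, b 1) ∈ U} =
      ∑ c ∈ U, #(availableTuplesThrough χ m R c) := by
    have hmaps : Set.MapsTo (fun b : Fin (m + 2) → V => χ s(b 0, b 1))
        {b ∈ availableTuples χ (m + 2) R | χ s(b 0, b 1) ∈ U} U := fun b hb => hb.2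
    rw [card_eq_sum_card_fiberwise (by simpa using hmaps)]
    refine sum_congr rfl fun c hc => ?_
    rw [← filter_availableTuples_eq_availableTuplesThrough (hU hc), filter_filter]
    congr 1
    ext b
    simp only [mem_filter]
    grind
  rw [hfiber, Nat.cast_sum, ← nsmul_eq_mul]
  exact card_nsmul_le_sum _ _ _ ha

lemma card_filter_availableTuples_eq {k : ℕ} {i j i' j' : Fin k} (hij : i ≠ j) (hij' : i' ≠ j') :
    #{b ∈ availableTuples χ k R | χ s(b i, b j) ∈ U} =
      #{b ∈ availableTuples χ k R | χ s(b i', b j') ∈ U} := by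
  obtain ⟨σ, hσ⟩ := Equiv.Perm.exists_extending_pair ![i, j] ![i', j']
    (by simpa [Function.Injective, Fin.forall_fin_two, eq_comm] using hij)
    (by simpa [Function.Injective, Fin.forall_fin_two, eq_comm] using hij')
  have hi : σ.symm i' = i := σ.symm_apply_eq.2 (hσ 0).symm
  have hj : σ.symm j' = j := σ.symm_apply_eq.2 (hσ 1).symm
  refine card_equiv (σ.arrowCongr (.refl V)) fun b => ?_
  have himage : univ.image (b ∘ σ.symm) = univ.image b := by
    rw [← image_image, image_univ_equiv]
  have hinj : Function.Injective (b ∘ σ.symm) ↔ Function.Injective b :=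
    Function.Injective.of_comp_iff' b σ.symm.bijective
  simp [mem_availableTuples, Equiv.arrowCongr, himage, hinj, hi, hj]

lemma card_colorFinset_inter_eq {k : ℕ} {b : Fin k → V} (hb : b ∈ rainbowTuples χ k) :
    #(colorFinset χ (univ.image b) ∩ U) = #{e ∈ cliqueEdges univ | χ (e.map b) ∈ U} := by
  obtain ⟨hinj, hrainbow⟩ := mem_rainbowTuples.1 hb
  have hinjOn : Set.InjOn (χ ∘ Sym2.map b) (cliqueEdges (univ : Finset (Fin k))) :=
    Set.InjOn.comp hrainbow (Sym2.map.injective hinj).injOn fun e he => by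
      rw [mem_coe, cliqueEdges_image _ hinj]
      exact mem_image_of_mem _ he
  rw [colorFinset, cliqueEdges_image _ hinj, image_image, ← filter_mem_eq_inter, filter_image,
    card_image_of_injOn]
  · rfl
  · exact hinjOn.mono (filter_subset _ _)

/-- The symmetry of `availableTuples` under permutations of the index set lets the edge between the
first two vertices stand for all edges. -/
lemma sum_card_colorFinset_inter :
    ∑ b ∈ availableTuples χ (m + 2) R, #(colorFinset χ (univ.image b) ∩ U) =
      (m + 2).choose 2 * #{b ∈ availableTuples χ (m + 2) R | χ s(b 0, b 1) ∈ U} := by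
  calc _ = ∑ b ∈ availableTuples χ (m + 2) R, #{e ∈ cliqueEdges univ | χ (e.map b) ∈ U} :=
        sum_congr rfl fun b hb => card_colorFinset_inter_eq (mem_filter.1 hb).1
    _ = ∑ e ∈ cliqueEdges univ, #{b ∈ availableTuples χ (m + 2) R | χ (e.map b) ∈ U} :=
        sum_card_bipartiteAbove_eq_sum_card_bipartiteBelow _
    _ = ∑ _e ∈ cliqueEdges (univ : Finset (Fin (m + 2))),
          #{b ∈ availableTuples χ (m + 2) R | χ s(b 0, b 1) ∈ U} := by
        refine sum_congr rfl fun e he => ?_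
        induction e with | _ i j
        exact card_filter_availableTuples_eq (mem_cliqueEdges.1 he).2.2 (by simp)
    _ = _ := by rw [sum_const, card_cliqueEdges, card_univ, Fintype.card_fin, smul_eq_mul]

lemma exists_isAvailable_le_card_inter (hU : U ⊆ R) (hne : U.Nonempty) {a B θ : ℝ} (ha : 0 < a)
    (haU : ∀ c ∈ U, a ≤ #(availableTuplesThrough χ m R c))
    (hB : ∑ c ∈ R, (#(availableTuplesThrough χ m R c) : ℝ) ≤ B)
    (hθ : θ * B ≤ (m + 2).choose 2 * a) :
    ∃ A, IsAvailable χ R A ∧ θ * #U ≤ #(colorFinset χ A ∩ U) := by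
  set Av := availableTuples χ (m + 2) R
  have hM := card_mul_le_card_filter_mem hU haU
  set M := #{b ∈ Av | χ s(b 0, b 1) ∈ U}
  have hUpos : (0 : ℝ) < #U := by exact_mod_cast hne.card_pos
  have hAv : Av.Nonempty := by
    have hMpos : 0 < M := by exact_mod_cast (mul_pos hUpos ha).trans_le hM
    exact (card_pos.1 hMpos).mono (filter_subset _ _)
  have hAvB : (#Av : ℝ) ≤ B := le_trans (by exact_mod_cast card_availableTuples_le_sum) hB
  obtain ⟨b, hb, hle⟩ : ∃ b ∈ Av,
      (m + 2).choose 2 * M ≤ #Av * #(colorFinset χ (univ.image b) ∩ U) := by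
    refine exists_le_of_sum_le hAv ?_
    rw [sum_const, smul_eq_mul, ← mul_sum, sum_card_colorFinset_inter]
  refine ⟨_, (mem_availableTuples.1 hb).2, ?_⟩
  have hBpos : 0 < B := lt_of_lt_of_le (by exact_mod_cast hAv.card_pos) hAvB
  refine le_of_mul_le_mul_left ?_ hBpos
  calc B * (θ * #U) = θ * B * #U := by ring
    _ ≤ (m + 2).choose 2 * a * #U := by gcongr
    _ = (m + 2).choose 2 * (#U * a) := by ring
    _ ≤ (m + 2).choose 2 * M := by gcongr
    _ ≤ #Av * #(colorFinset χ (univ.image b) ∩ U) := by exact_mod_cast hle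
    _ ≤ B * #(colorFinset χ (univ.image b) ∩ U) := by gcongr

end Averaging

section GreedyCover

lemma exists_greedy_cover {α β : Type*} [DecidableEq β] {f : α → Finset β} {P : α → Prop}
    {G : Finset β} {θ : ℝ} (hθ : θ ≤ 1)
    (h : ∀ U ⊆ G, U.Nonempty → ∃ A, P A ∧ θ * #U ≤ #(f A ∩ U)) (q : ℕ) :
    ∃ 𝒞 : Finset α, #𝒞 ≤ q ∧ (∀ A ∈ 𝒞, P A) ∧ (#(G \ 𝒞.biUnion f) : ℝ) ≤ (1 - θ) ^ q * #G := by
  classical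
  induction q with
  | zero => exact ⟨∅, by simp⟩
  | succ q ih =>
    obtain ⟨𝒞, hcard, hP, hleft⟩ := ih
    set U := G \ 𝒞.biUnion f
    obtain hU | hU := U.eq_empty_or_nonempty
    · refine ⟨𝒞, by omega, hP, ?_⟩
      rw [show G \ 𝒞.biUnion f = ∅ from hU, card_empty, Nat.cast_zero]
      have : 0 ≤ 1 - θ := sub_nonneg.2 hθ
      positivity
    · obtain ⟨A, hA, hlarge⟩ := h U sdiff_subset hU
      refine ⟨insert A 𝒞, (card_insert_le _ _).trans (by omega), forall_mem_insert _ _ _ |>.2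
        ⟨hA, hP⟩, ?_⟩
      have hsplit : (#(U \ f A) : ℝ) + #(f A ∩ U) = #U := by
        rw [inter_comm]
        exact_mod_cast card_sdiff_add_card_inter U (f A)
      have hleft' : G \ (insert A 𝒞).biUnion f = U \ f A := by
        rw [biUnion_insert, union_comm, ← sup_eq_union, ← sdiff_sdiff_left]
      rw [hleft']
      calc (#(U \ f A) : ℝ) ≤ (1 - θ) * #U := by linarith
        _ ≤ (1 - θ) * ((1 - θ) ^ q * #G) := by gcongr
        _ = (1 - θ) ^ (q + 1) * #G := by ring

variable {V C : Type*} [Fintype V] [DecidableEq V] [DecidableEq C] {χ : Sym2 V → C} {R : Finset C}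

/-- The set `R` of colors is the union of the color sets of at most `B` available cliques. -/
def HasCliqueCover (χ : Sym2 V → C) (B : ℝ) (R : Finset C) : Prop :=
  ∃ 𝒞 : Finset (Finset V), #𝒞 ≤ B ∧ (∀ A ∈ 𝒞, IsAvailable χ R A) ∧ R = 𝒞.biUnion (colorFinset χ)

lemma exists_isAvailable_colorFinset_eq_singleton {c : C} (hc : c ∈ R)
    (hne : (colorPairs χ c).Nonempty) : ∃ A, IsAvailable χ R A ∧ colorFinset χ A = {c} := by
  obtain ⟨⟨x, y⟩, hxy⟩ := hne
  obtain ⟨hne, rfl⟩ := mem_colorPairs.1 hxy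
  have hcolors : colorFinset χ {x, y} = {χ s(x, y)} := by
    ext d
    simp only [mem_colorFinset, mem_insert, mem_singleton]
    have := Sym2.eq_swap (a := x) (b := y)
    grind
  exact ⟨{x, y}, ⟨isRainbow_pair χ x y, by simpa [hcolors] using hc⟩, hcolors⟩

lemma hasCliqueCover_of_partial_cover (hne : ∀ c, (colorPairs χ c).Nonempty)
    {𝒞 : Finset (Finset V)} (h𝒞 : ∀ A ∈ 𝒞, IsAvailable χ R A) {B : ℝ}
    (hB : (#𝒞 : ℝ) + #(R \ 𝒞.biUnion (colorFinset χ)) ≤ B) : HasCliqueCover χ B R := by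
  have hedge : ∀ c ∈ R, ∃ A, IsAvailable χ R A ∧ colorFinset χ A = {c} :=
    fun c hc => exists_isAvailable_colorFinset_eq_singleton hc (hne c)
  choose! edge hedge hcolor using hedge
  set L := R \ 𝒞.biUnion (colorFinset χ)
  have havail : ∀ A ∈ 𝒞 ∪ L.image edge, IsAvailable χ R A := by
    intro A hA
    rcases mem_union.1 hA with hA | hA
    · exact h𝒞 A hA
    · obtain ⟨c, hc, rfl⟩ := mem_image.1 hA
      exact hedge c (mem_sdiff.1 hc).1
  have hcard : #(𝒞 ∪ L.image edge) ≤ #𝒞 + #L :=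
    (card_union_le _ _).trans (Nat.add_le_add_left card_image_le _)
  refine ⟨𝒞 ∪ L.image edge, le_trans (by exact_mod_cast hcard) hB, havail,
    subset_antisymm (fun c hc => ?_) (biUnion_subset.2 fun A hA => (havail A hA).2)⟩
  by_cases hcov : c ∈ 𝒞.biUnion (colorFinset χ)
  · exact biUnion_subset_biUnion_of_subset_left _ subset_union_left hcov
  · have hcL : c ∈ L := mem_sdiff.2 ⟨hc, hcov⟩
    exact mem_biUnion.2 ⟨edge c, mem_union_right _ (mem_image_of_mem _ hcL), by simp [hcolor c hc]⟩

end GreedyCover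

section Covering

lemma sum_one_add_le_of_sum_sq_le {ι : Type*} {s : Finset ι} {y : ι → ℝ} {τ : ℝ} (hτ : 0 ≤ τ)
    (h : ∑ i ∈ s, y i ^ 2 ≤ #s * τ ^ 2) : ∑ i ∈ s, (1 + y i) ≤ (1 + τ) * #s := by
  have hsq : (∑ i ∈ s, y i) ^ 2 ≤ (#s * τ) ^ 2 :=
    calc _ ≤ #s * ∑ i ∈ s, y i ^ 2 := sq_sum_le_card_mul_sum_sq
      _ ≤ #s * (#s * τ ^ 2) := by gcongr
      _ = _ := by ring
  have hsum : ∑ i ∈ s, y i ≤ #s * τ := le_of_sq_le_sq hsq (by positivity)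
  rw [sum_add_distrib, sum_const, nsmul_one]
  linarith

lemma card_filter_lt_neg_le_of_sum_sq_le {ι : Type*} {s : Finset ι} {y : ι → ℝ} {τ B : ℝ}
    (hτ : 0 < τ) (h : ∑ i ∈ s, y i ^ 2 ≤ B) : (#{i ∈ s | y i < -τ} : ℝ) ≤ B / τ ^ 2 := by
  rw [le_div_iff₀ (by positivity), ← nsmul_eq_mul]
  calc #{i ∈ s | y i < -τ} • τ ^ 2
      ≤ ∑ i ∈ s with y i < -τ, y i ^ 2 :=
        card_nsmul_le_sum _ _ _ fun i hi => by nlinarith [(mem_filter.1 hi).2]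
    _ ≤ ∑ i ∈ s, y i ^ 2 :=
        sum_le_sum_of_subset_of_nonneg (filter_subset _ _) fun _ _ _ => sq_nonneg _
    _ ≤ B := h

variable {V C : Type*} [Fintype V] [DecidableEq V] [Fintype C] [DecidableEq C] {χ : Sym2 V → C}
  {m : ℕ} {R : Finset C} {a b τ : ℝ}

lemma sum_card_availableTuplesThrough_le (ha : 0 < a) (hlower : ∀ c, a ≤ meanAvailable χ m c)
    (hupper : ∀ c, meanAvailable χ m c ≤ b) (hτ : 0 ≤ τ)
    (hR : ∑ c, deviation χ m R c ^ 2 ≤ Fintype.card C * τ ^ 2) :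
    ∑ c ∈ R, (#(availableTuplesThrough χ m R c) : ℝ) ≤ b * ((1 + τ) * Fintype.card C) := by
  rcases isEmpty_or_nonempty C with hC | ⟨⟨c₀⟩⟩
  · simp [Subsingleton.elim R ∅]
  have hb : 0 ≤ b := ha.le.trans ((hlower c₀).trans (hupper c₀))
  calc ∑ c ∈ R, (#(availableTuplesThrough χ m R c) : ℝ)
      ≤ ∑ c, (#(availableTuplesThrough χ m R c) : ℝ) :=
        sum_le_sum_of_subset_of_nonneg (subset_univ R) fun _ _ _ => Nat.cast_nonneg _
    _ ≤ ∑ c, b * (1 + deviation χ m R c) := by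
        refine sum_le_sum fun c _ => ?_
        have hpos := ha.trans_le (hlower c)
        rw [card_availableTuplesThrough_eq hpos]
        refine mul_le_mul_of_nonneg_right (hupper c) ?_
        rw [deviation, add_sub_cancel]
        exact div_nonneg (Nat.cast_nonneg _) hpos.le
    _ ≤ b * ((1 + τ) * Fintype.card C) := by
        rw [← mul_sum]
        exact mul_le_mul_of_nonneg_left (sum_one_add_le_of_sum_sq_le hτ hR) hb

lemma hasCliqueCover_of_sum_sq_deviation_le (hne : ∀ c, (colorPairs χ c).Nonempty) (ha : 0 < a)
    (hlower : ∀ c, a ≤ meanAvailable χ m c) (hupper : ∀ c, meanAvailable χ m c ≤ b) {Δ θ : ℝ}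
    (hτ : 0 < τ) (hτ1 : τ < 1) (hΔ : Δ ≤ τ ^ 2)
    (hR : ∑ c, deviation χ m R c ^ 2 ≤ Fintype.card C * Δ) (hθ1 : θ ≤ 1)
    (hθ : θ * (b * ((1 + τ) * Fintype.card C)) ≤ (m + 2).choose 2 * ((1 - τ) * a)) (q : ℕ) :
    HasCliqueCover χ (q + ((1 - θ) ^ q * Fintype.card C + Fintype.card C * Δ / τ ^ 2)) R := by
  set rich : Finset C := {c ∈ R | -τ ≤ deviation χ m R c}
  have hrich : ∀ c ∈ rich, (1 - τ) * a ≤ #(availableTuplesThrough χ m R c) := by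
    intro c hc
    rw [card_availableTuplesThrough_eq (ha.trans_le (hlower c)), mul_comm]
    have hdev := (mem_filter.1 hc).2
    exact mul_le_mul (hlower c) (by linarith) (by linarith) (ha.le.trans (hlower c))
  obtain ⟨𝒞, hcard, h𝒞, hleft⟩ := exists_greedy_cover (f := colorFinset χ) hθ1
    (fun U hU hUne => exists_isAvailable_le_card_inter (hU.trans (filter_subset _ _)) hUne
      (mul_pos (sub_pos.2 hτ1) ha) (fun c hc => hrich c (hU hc))
      (sum_card_availableTuplesThrough_le ha hlower hupper hτ.le (hR.trans (by gcongr))) hθ) q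
  set poor : Finset C := {c | deviation χ m R c < -τ}
  have hpoor := card_filter_lt_neg_le_of_sum_sq_le hτ hR
  have hsub : R \ 𝒞.biUnion (colorFinset χ) ⊆ rich \ 𝒞.biUnion (colorFinset χ) ∪ poor := by
    intro c hc
    simp only [rich, poor, mem_union, mem_sdiff, mem_filter, mem_univ, true_and] at hc ⊢
    grind
  have hrest := (card_le_card hsub).trans (card_union_le _ _)
  have hθ0 : 0 ≤ 1 - θ := sub_nonneg.2 hθ1
  refine hasCliqueCover_of_partial_cover hne h𝒞 ?_
  calc (#𝒞 : ℝ) + #(R \ 𝒞.biUnion (colorFinset χ))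
      ≤ q + (#(rich \ 𝒞.biUnion (colorFinset χ)) + #poor) := by
        exact_mod_cast add_le_add hcard hrest
    _ ≤ q + ((1 - θ) ^ q * #rich + Fintype.card C * Δ / τ ^ 2) := by gcongr
    _ ≤ _ := by
        gcongr
        exact card_le_univ rich

end Covering

section BalancedColorings

variable {V C : Type*} [Fintype V] [DecidableEq V] [DecidableEq C] {χ : Sym2 V → C}

/-- Every color class has between `(1 - δ) * |V| / 2` and `(1 + δ) * |V| / 2` edges. As `colorPairs`
counts each edge twice, the factor `1 / 2` disappears. -/
def IsBalanced (χ : Sym2 V → C) (δ : ℝ) : Prop :=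
  ∀ c, (1 - δ) * Fintype.card V ≤ #(colorPairs χ c) ∧ #(colorPairs χ c) ≤ (1 + δ) * Fintype.card V

lemma IsBalanced.colorPairs_nonempty [Nonempty V] {δ : ℝ} (hbal : IsBalanced χ δ) (hδ : δ < 1)
    (c : C) : (colorPairs χ c).Nonempty := by
  have hV : (0 : ℝ) < Fintype.card V := by exact_mod_cast Fintype.card_pos
  exact card_pos.1 (by exact_mod_cast (mul_pos (sub_pos.2 hδ) hV).trans_le (hbal c).1)

lemma IsBalanced.mul_card_le [Nonempty V] [Fintype C] {δ : ℝ} (hbal : IsBalanced χ δ) :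
    (1 - δ) * Fintype.card C ≤ Fintype.card V := by
  have hV : (0 : ℝ) < Fintype.card V := by exact_mod_cast Fintype.card_pos
  have hpairs : ∑ c, #(colorPairs χ c) ≤ Fintype.card V * Fintype.card V := by
    rw [← Fintype.card_prod, ← card_univ (α := V × V),
      card_eq_sum_card_fiberwise (s := univ) (f := fun p : V × V => χ s(p.1, p.2)) (t := univ)
      (fun _ _ => mem_coe.2 (mem_univ _))]
    exact sum_le_sum fun c _ => card_le_card fun p hp => by simp [(mem_colorPairs.1 hp).2]
  refine le_of_mul_le_mul_right ?_ hV
  calc (1 - δ) * Fintype.card C * Fintype.card V = ∑ _c : C, (1 - δ) * (Fintype.card V : ℝ) := by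
        rw [sum_const, card_univ, nsmul_eq_mul]
        ring
    _ ≤ ∑ c, (#(colorPairs χ c) : ℝ) := sum_le_sum fun c _ => (hbal c).1
    _ ≤ _ := by exact_mod_cast hpairs

lemma card_rainbowTuplesThrough_le (hχ : IsProperColoring χ) {m h : ℕ} (hh : m + 3 ≤ 2 * h)
    (c : C) : (#(rainbowTuplesThrough χ m c) : ℝ) ≤
      #(colorPairs χ c) * ((Fintype.card V : ℝ) + (m + 2) * (m + 2).choose 2 * 2 ^ h) ^ m := by
  have hchoose : (1 : ℝ) ≤ (m + 2).choose 2 := by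
    exact_mod_cast Nat.choose_pos (Nat.le_add_left 2 m)
  calc (#(rainbowTuplesThrough χ m c) : ℝ)
      ≤ ∑ b ∈ rainbowTuplesThrough χ m c,
          2 ^ #((({c} : Finset C).erase c) ∩ (colorFinset χ (univ.image b)).erase c) := by
        rw [← nsmul_one]
        exact card_nsmul_le_sum _ _ _ fun b _ => one_le_pow₀ one_le_two
    _ ≤ #(colorPairs χ c) * (Fintype.card V + (m + 2) * #{c} * 2 ^ h) ^ m :=
        sum_two_pow_card_inter_le hχ (mem_singleton_self c) hh
    _ ≤ _ := by
        rw [card_singleton, Nat.cast_one]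
        gcongr

/-- The order of magnitude of `meanAvailable` when every color class has about `N / 2` edges. -/
noncomputable def meanScale (N m : ℕ) : ℝ :=
  N * ((N - (m + 2) ^ 3 : ℕ) : ℝ) ^ m / 2 ^ ((m + 2).choose 2 - 1)

lemma IsBalanced.mul_meanScale_le_meanAvailable {δ : ℝ} (hbal : IsBalanced χ δ)
    (hχ : IsProperColoring χ) (m : ℕ) (c : C) :
    (1 - δ) * meanScale (Fintype.card V) m ≤ meanAvailable χ m c := by
  have hlower := card_colorPairs_mul_pow_le_card_rainbowTuplesThrough hχ m c
  rw [meanScale, meanAvailable, ← mul_div_assoc, ← mul_assoc]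
  gcongr
  calc _ ≤ (#(colorPairs χ c) : ℝ) * ((Fintype.card V - (m + 2) ^ 3 : ℕ) : ℝ) ^ m := by
        gcongr
        exact (hbal c).1
    _ ≤ _ := by exact_mod_cast hlower

lemma IsBalanced.meanAvailable_le {δ ρ : ℝ} (hbal : IsBalanced χ δ) (hχ : IsProperColoring χ)
    {m h : ℕ} (hh : m + 3 ≤ 2 * h)
    (hρ : ((Fintype.card V : ℝ) + (m + 2) * (m + 2).choose 2 * 2 ^ h) ^ m ≤
      (1 + ρ) * ((Fintype.card V - (m + 2) ^ 3 : ℕ) : ℝ) ^ m) (c : C) :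
    meanAvailable χ m c ≤ (1 + δ) * ((1 + ρ) * meanScale (Fintype.card V) m) := by
  rw [meanScale, meanAvailable, ← mul_div_assoc, ← mul_div_assoc]
  gcongr
  calc (#(rainbowTuplesThrough χ m c) : ℝ)
      ≤ #(colorPairs χ c) * ((Fintype.card V : ℝ) + (m + 2) * (m + 2).choose 2 * 2 ^ h) ^ m :=
        card_rainbowTuplesThrough_le hχ hh c
    _ ≤ (1 + δ) * Fintype.card V * ((1 + ρ) * ((Fintype.card V - (m + 2) ^ 3 : ℕ) : ℝ) ^ m) := by
        have hupper := (hbal c).2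
        have hnonneg : 0 ≤ (1 + δ) * (Fintype.card V : ℝ) := (Nat.cast_nonneg _).trans hupper
        gcongr
    _ = _ := by ring

lemma IsBalanced.hasCliqueCover [Nonempty V] [Fintype C] (hbal : IsBalanced χ (1 / 100))
    (hχ : IsProperColoring χ) {m h : ℕ} (hh : m + 3 ≤ 2 * h) (hN : (m + 2) ^ 3 < Fintype.card V)
    {ρ Δ θ : ℝ} (hρ1 : ρ ≤ 1 / 100)
    (hρ : ((Fintype.card V : ℝ) + (m + 2) * (m + 2).choose 2 * 2 ^ h) ^ m ≤
      (1 + ρ) * ((Fintype.card V - (m + 2) ^ 3 : ℕ) : ℝ) ^ m)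
    (hθ0 : 0 ≤ θ) (hθ1 : θ ≤ 1) (hθ : θ * Fintype.card V ≤ 93 / 100 * (m + 2).choose 2)
    (hΔ : Δ ≤ (1 / 100) ^ 2) {R : Finset C}
    (hR : ∑ c, deviation χ m R c ^ 2 ≤ Fintype.card C * Δ) (q : ℕ) :
    HasCliqueCover χ
      (q + ((1 - θ) ^ q * Fintype.card C + Fintype.card C * Δ / (1 / 100) ^ 2)) R := by
  have hscale : 0 < meanScale (Fintype.card V) m := by
    have hV : (0 : ℝ) < Fintype.card V := by exact_mod_cast Fintype.card_pos
    have hsub : (0 : ℝ) < (Fintype.card V - (m + 2) ^ 3 : ℕ) := by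
      exact_mod_cast Nat.sub_pos_of_lt hN
    unfold meanScale
    positivity
  refine hasCliqueCover_of_sum_sq_deviation_le (hbal.colorPairs_nonempty (by norm_num))
    (mul_pos (by norm_num) hscale) (hbal.mul_meanScale_le_meanAvailable hχ m)
    (hbal.meanAvailable_le hχ hh hρ) (by norm_num) (by norm_num) hΔ hR hθ1 ?_ q
  have hθC : θ * Fintype.card C ≤ 93 / 99 * (m + 2).choose 2 := by
    have := mul_le_mul_of_nonneg_left hbal.mul_card_le hθ0
    linarith
  calc θ * ((1 + 1 / 100) * ((1 + ρ) * meanScale (Fintype.card V) m) *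
        ((1 + 1 / 100) * Fintype.card C))
      = (1 + ρ) * (1 + 1 / 100) ^ 2 * (θ * Fintype.card C) * meanScale (Fintype.card V) m := by ring
    _ ≤ (1 + 1 / 100) * (1 + 1 / 100) ^ 2 * (93 / 99 * (m + 2).choose 2) *
          meanScale (Fintype.card V) m := by
        gcongr
    _ ≤ (99 / 100) ^ 2 * (m + 2).choose 2 * meanScale (Fintype.card V) m := by
        gcongr ?_ * _
        linarith [(m + 2).choose 2 |>.cast_nonneg (α := ℝ)]
    _ = _ := by ring

end BalancedColorings

section Numerics

open Filter

lemma eventually_mul_pow_mul_two_rpow_le :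
    ∀ᶠ L : ℝ in atTop, 200 * L ^ 7 * (2 : ℝ) ^ (24 / 25 * L) ≤ 2 ^ L := by
  have hb : 0 < Real.log 2 / 25 := div_pos (Real.log_pos one_lt_two) (by norm_num)
  filter_upwards [eventually_ge_atTop 0, (isLittleO_pow_exp_pos_mul_atTop (k := 7) hb).bound
    (by norm_num : (0 : ℝ) < 1 / 200)] with L hL hexp
  rw [Real.norm_of_nonneg (by positivity), Real.norm_of_nonneg (by positivity)] at hexp
  calc 200 * L ^ 7 * (2 : ℝ) ^ (24 / 25 * L)
      ≤ Real.exp (Real.log 2 / 25 * L) * 2 ^ (24 / 25 * L) := by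
        gcongr
        linarith
    _ = 2 ^ L := by
        rw [Real.rpow_def_of_pos two_pos, Real.rpow_def_of_pos two_pos, ← Real.exp_add]
        ring_nf

lemma add_pow_le_one_add_mul_sub_pow {x y z ρ : ℝ} {m : ℕ} (hpos : 0 < x + y) (hz : z ≤ x)
    (hρ0 : 0 ≤ ρ) (hρ1 : ρ ≤ 1) (hm : m * (y + z) ≤ ρ / 2 * (x + y)) :
    (x + y) ^ m ≤ (1 + ρ) * (x - z) ^ m := by
  set t := (y + z) / (x + y) with ht
  have ht1 : t ≤ 1 := (div_le_one hpos).2 (by linarith)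
  have hmt : m * t ≤ ρ / 2 := by rwa [ht, ← mul_div_assoc, div_le_iff₀ hpos]
  have hbernoulli : 1 + m * -t ≤ (1 + -t) ^ m := one_add_mul_le_pow (by linarith) m
  have hxz : x - z = (x + y) * (1 + -t) := by
    rw [ht]
    field_simp
    ring
  calc (x + y) ^ m = (x + y) ^ m * 1 := (mul_one _).symm
    _ ≤ (x + y) ^ m * ((1 + ρ) * (1 - ρ / 2)) := by
        gcongr
        nlinarith
    _ ≤ (x + y) ^ m * ((1 + ρ) * (1 + -t) ^ m) := by
        gcongr
        linarith
    _ = (1 + ρ) * (x - z) ^ m := by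
        rw [hxz, mul_pow]
        ring

section CliqueSize

variable {L : ℝ} {m h : ℕ}

lemma cast_choose_two_eq (hm : m + 3 = 2 * h) :
    ((m + 2).choose 2 : ℝ) = (2 * h - 1) * (h - 1) := by
  have hcast : (m : ℝ) + 3 = 2 * h := by exact_mod_cast hm
  rw [Nat.cast_choose_two]
  push_cast
  rw [show (m : ℝ) = 2 * h - 3 by linarith]
  ring

variable (hL : 1000 ≤ L) (hh : h = ⌊24 / 25 * L⌋₊) (hm : m + 3 = 2 * h)

include hL hh

lemma two_pow_floor_le : (2 : ℝ) ^ h ≤ 2 ^ (24 / 25 * L) := by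
  rw [← Real.rpow_natCast]
  exact Real.rpow_le_rpow_of_exponent_le one_le_two (hh ▸ Nat.floor_le (by linarith))

include hm

lemma cast_add_two_le : (m : ℝ) + 2 ≤ 2 * L := by
  have hcast : (m : ℝ) + 3 = 2 * h := by exact_mod_cast hm
  have : (h : ℝ) ≤ 24 / 25 * L := hh ▸ Nat.floor_le (by linarith)
  linarith

lemma mul_sq_le_choose_two : 9 / 5 * L ^ 2 ≤ (m + 2).choose 2 := by
  have hlt : 24 / 25 * L < h + 1 := hh ▸ Nat.lt_floor_add_one _
  rw [cast_choose_two_eq hm]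
  calc 9 / 5 * L ^ 2 ≤ (48 / 25 * L - 3) * (24 / 25 * L - 2) := by nlinarith
    _ ≤ (2 * h - 1) * (h - 1) :=
        mul_le_mul (by linarith) (by linarith) (by linarith) (by linarith)

lemma choose_two_le_two_mul_sq : ((m + 2).choose 2 : ℝ) ≤ 2 * L ^ 2 := by
  have hle : (h : ℝ) ≤ 24 / 25 * L := hh ▸ Nat.floor_le (by linarith)
  have hlt : 24 / 25 * L < h + 1 := hh ▸ Nat.lt_floor_add_one _
  rw [cast_choose_two_eq hm]
  calc (2 * (h : ℝ) - 1) * (h - 1) ≤ (2 * L) * L := by gcongr <;> linarith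
    _ = 2 * L ^ 2 := by ring

lemma cast_add_two_pow_three_le : ((m : ℝ) + 2) ^ 3 ≤ 8 * L ^ 3 :=
  calc ((m : ℝ) + 2) ^ 3 ≤ (2 * L) ^ 3 :=
        pow_le_pow_left₀ (by positivity) (cast_add_two_le hL hh hm) 3
    _ = 8 * L ^ 3 := by ring

variable {N : ℕ} (hN : 200 * L ^ 7 * (2 : ℝ) ^ (24 / 25 * L) ≤ N)

include hN

lemma add_two_pow_three_lt : (m + 2) ^ 3 < N := by
  have hpow : 1 ≤ (2 : ℝ) ^ (24 / 25 * L) := Real.one_le_rpow one_le_two (by linarith)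
  have hlt : ((m : ℝ) + 2) ^ 3 < N :=
    calc ((m : ℝ) + 2) ^ 3 ≤ 8 * L ^ 3 := cast_add_two_pow_three_le hL hh hm
      _ < 200 * L ^ 7 := by gcongr <;> linarith
      _ = 200 * L ^ 7 * 1 := (mul_one _).symm
      _ ≤ 200 * L ^ 7 * 2 ^ (24 / 25 * L) := by gcongr
      _ ≤ N := hN
  exact_mod_cast hlt

lemma add_pow_le_one_add_inv_cube_mul_sub_pow :
    ((N : ℝ) + (m + 2) * (m + 2).choose 2 * 2 ^ h) ^ m ≤
      (1 + 1 / L ^ 3) * ((N - (m + 2) ^ 3 : ℕ) : ℝ) ^ m := by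
  have hlt := add_two_pow_three_lt hL hh hm hN
  have hNpos : 0 < N := pos_of_gt hlt
  have hm2 := cast_add_two_le hL hh hm
  set Q : ℝ := 2 ^ (24 / 25 * L)
  have hQ : 1 ≤ Q := Real.one_le_rpow one_le_two (by linarith)
  have hy : (m + 2) * (m + 2).choose 2 * (2 : ℝ) ^ h ≤ 2 * L * (2 * L ^ 2) * Q := by
    gcongr
    exacts [choose_two_le_two_mul_sq hL hh hm, two_pow_floor_le hL hh]
  have hz : ((m : ℝ) + 2) ^ 3 ≤ 8 * L ^ 3 * Q :=
    (cast_add_two_pow_three_le hL hh hm).trans (le_mul_of_one_le_right (by positivity) hQ)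
  rw [Nat.cast_sub hlt.le]
  push_cast
  refine add_pow_le_one_add_mul_sub_pow (by positivity) (by exact_mod_cast hlt.le) (by positivity)
    ((div_le_one (by positivity)).2 (one_le_pow₀ (by linarith))) ?_
  calc (m : ℝ) * ((m + 2) * (m + 2).choose 2 * 2 ^ h + (m + 2) ^ 3)
      ≤ 2 * L * (2 * L * (2 * L ^ 2) * Q + 8 * L ^ 3 * Q) := by
        gcongr
        linarith
    _ ≤ 1 / L ^ 3 / 2 * (200 * L ^ 7 * Q) := by
        field_simp
        norm_num
    _ ≤ _ := by
        gcongr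
        exact hN.trans (le_add_of_nonneg_right (by positivity))

end CliqueSize

lemma one_sub_pow_le_three_div_sq {N L θ : ℝ} {q : ℕ} (hN : 0 < N) (hL : 1 ≤ L) (hθ1 : θ ≤ 1)
    (hθ : 837 / 500 * L ^ 2 ≤ θ * N) (hq : 19 / 20 * (N * Real.logb 2 L / L ^ 2) < q + 1) :
    (1 - θ) ^ q ≤ 3 / L ^ 2 := by
  have hlogL : 0 ≤ Real.log L := Real.log_nonneg hL
  have hlogb : 0 ≤ Real.logb 2 L := Real.logb_nonneg one_lt_two hL
  have hθ0 : 0 ≤ θ := by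
    have : 0 ≤ θ * N := le_trans (by positivity) hθ
    exact nonneg_of_mul_nonneg_left this hN
  have hθq : 159 / 100 * Real.logb 2 L ≤ θ * (q + 1) :=
    calc 159 / 100 * Real.logb 2 L
        ≤ 837 / 500 * L ^ 2 * (19 / 20 * (Real.logb 2 L / L ^ 2)) := by
          field_simp
          linarith
      _ ≤ θ * N * (19 / 20 * (Real.logb 2 L / L ^ 2)) := by gcongr
      _ = θ * (19 / 20 * (N * Real.logb 2 L / L ^ 2)) := by ring
      _ ≤ θ * (q + 1) := by gcongr
  have hlog : 2 * Real.log L ≤ 159 / 100 * Real.logb 2 L := by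
    have : Real.logb 2 L * Real.log 2 = Real.log L := by
      rw [Real.logb, div_mul_cancel₀ _ (Real.log_pos one_lt_two).ne']
    nlinarith [Real.log_two_lt_d9]
  calc (1 - θ) ^ q ≤ Real.exp (-θ) ^ q :=
        pow_le_pow_left₀ (by linarith) (Real.one_sub_le_exp_neg θ) q
    _ = Real.exp (q * -θ) := (Real.exp_nat_mul _ _).symm
    _ ≤ Real.exp (1 - 2 * Real.log L) := Real.exp_le_exp.2 (by linarith)
    _ = Real.exp 1 / L ^ 2 := by
        rw [Real.exp_sub, two_mul, Real.exp_add, Real.exp_log (by linarith), sq]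
    _ ≤ 3 / L ^ 2 := by
        gcongr
        linarith [Real.exp_one_lt_d9]

end Numerics

section CoverSize

lemma cover_size_le {N L n Δ p : ℝ} {q : ℕ} (hN : 0 ≤ N) (hL : 0 < L) (hn : 0 ≤ n)
    (hnN : (1 - 1 / 100) * n ≤ N) (hl : 100 ≤ Real.logb 2 L)
    (hq : q ≤ 19 / 20 * (N * Real.logb 2 L / L ^ 2)) (hp : p ≤ 3 / L ^ 2)
    (hΔ : Δ ≤ 1 / (10 ^ 8 * L ^ 2)) :
    q + (p * n + n * Δ / (1 / 100) ^ 2) ≤ N * Real.logb 2 L / L ^ 2 := by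
  have hrest : p * n + n * Δ / (1 / 100) ^ 2 ≤ 1 / 20 * (N * Real.logb 2 L / L ^ 2) :=
    calc p * n + n * Δ / (1 / 100) ^ 2
        ≤ 3 / L ^ 2 * n + n * (1 / (10 ^ 8 * L ^ 2)) / (1 / 100) ^ 2 := by gcongr
      _ = (3 + 1 / 10 ^ 4) * n / L ^ 2 := by
          field_simp
          ring
      _ ≤ 1 / 20 * (N * 100) / L ^ 2 := by
          gcongr ?_ / _
          linarith
      _ ≤ 1 / 20 * (N * Real.logb 2 L) / L ^ 2 := by gcongr
      _ = _ := mul_div_assoc _ _ _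
  linarith

variable {V C : Type*} [Fintype V] [Fintype C] [DecidableEq V] [DecidableEq C]
  [Nonempty V] {χ : Sym2 V → C} {L : ℝ}

lemma IsBalanced.hasCliqueCover_of_sum_sq_le (hbal : IsBalanced χ (1 / 100))
    (hχ : IsProperColoring χ) {m h : ℕ} (hL : 1000 ≤ L) (hl : 100 ≤ Real.logb 2 L)
    (hh : h = ⌊24 / 25 * L⌋₊) (hm : m + 3 = 2 * h)
    (hN : 200 * L ^ 7 * (2 : ℝ) ^ (24 / 25 * L) ≤ Fintype.card V) {Δ : ℝ}
    (hΔ : Δ ≤ 1 / (10 ^ 8 * L ^ 2)) {R : Finset C}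
    (hR : ∑ c, deviation χ m R c ^ 2 ≤ Fintype.card C * Δ) :
    HasCliqueCover χ (Fintype.card V * Real.logb 2 L / L ^ 2) R := by
  have hV : (0 : ℝ) < Fintype.card V := by exact_mod_cast Fintype.card_pos
  have hL0 : 0 < L := by linarith
  have hρ1 : 1 / L ^ 3 ≤ 1 / 100 := by
    gcongr
    exact (by linarith : 100 ≤ L).trans (le_self_pow₀ (by linarith) three_ne_zero)
  have hΔ1 : Δ ≤ (1 / 100) ^ 2 := hΔ.trans <| by
    rw [one_div_pow]
    gcongr
    nlinarith
  set θ : ℝ := 93 / 100 * (m + 2).choose 2 / Fintype.card V with hθ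
  have hθN : θ * Fintype.card V = 93 / 100 * (m + 2).choose 2 := div_mul_cancel₀ _ hV.ne'
  have hθ1 : θ ≤ 1 := by
    rw [hθ, div_le_one hV]
    have hchoose := choose_two_le_two_mul_sq hL hh hm
    have hLsq : L ^ 2 * 1 ≤ L ^ 7 * (2 : ℝ) ^ (24 / 25 * L) := by
      gcongr
      exacts [by linarith, by norm_num, Real.one_le_rpow one_le_two (by linarith)]
    linarith [sq_nonneg L]
  set q := ⌊19 / 20 * (Fintype.card V * Real.logb 2 L / L ^ 2)⌋₊
  obtain ⟨𝒞, hcard, h𝒞⟩ := hbal.hasCliqueCover hχ hm.le (add_two_pow_three_lt hL hh hm hN) hρ1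
    (add_pow_le_one_add_inv_cube_mul_sub_pow hL hh hm hN) (by positivity) hθ1 hθN.le hΔ1 hR q
  refine ⟨𝒞, hcard.trans ?_, h𝒞⟩
  refine cover_size_le hV.le hL0 (Nat.cast_nonneg _) hbal.mul_card_le hl
    (Nat.floor_le (by positivity)) ?_ hΔ
  refine one_sub_pow_le_three_div_sq hV (by linarith) hθ1 ?_ (Nat.lt_floor_add_one _)
  linarith [mul_sq_le_choose_two hL hh hm]

lemma IsBalanced.one_sub_mul_two_pow_le_ncard_hasCliqueCover [Nonempty C]
    (hbal : IsBalanced χ (1 / 100)) (hχ : IsProperColoring χ) {ε : ℝ} (hε : 0 < ε)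
    (hL : 1000 ≤ L) (hεL : 10 ^ 8 / ε ≤ L) (hl : 100 ≤ Real.logb 2 L)
    (hN : 200 * L ^ 7 * (2 : ℝ) ^ (24 / 25 * L) ≤ Fintype.card V) :
    (1 - ε) * 2 ^ Fintype.card C ≤
      ({R | HasCliqueCover χ (Fintype.card V * Real.logb 2 L / L ^ 2) R}.ncard : ℝ) := by
  obtain ⟨h, hh⟩ : ∃ h, h = ⌊24 / 25 * L⌋₊ := ⟨_, rfl⟩
  obtain ⟨m, hm⟩ : ∃ m, m + 3 = 2 * h := by
    have : 2 ≤ h := hh ▸ Nat.le_floor (by push_cast; linarith)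
    exact ⟨2 * h - 3, by omega⟩
  have hΔ : 1 / L ^ 3 / ε ≤ 1 / (10 ^ 8 * L ^ 2) := by
    have hL0 : 0 < L := by linarith
    rw [div_div]
    gcongr 1 / ?_
    calc 10 ^ 8 * L ^ 2 ≤ L * ε * L ^ 2 := by
          gcongr
          exact (div_le_iff₀ hε).1 hεL
      _ = _ := by ring
  refine (one_sub_mul_two_pow_le_card_small_deviation hχ hm.le (add_two_pow_three_lt hL hh hm hN)
    (by positivity) hε (add_pow_le_one_add_inv_cube_mul_sub_pow hL hh hm hN)
    (hbal.colorPairs_nonempty (by norm_num))).trans ?_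
  rw [← Set.ncard_coe_finset]
  refine Nat.cast_le.2 (Set.ncard_le_ncard (fun R hR => ?_) (Set.toFinite _))
  exact hbal.hasCliqueCover_of_sum_sq_le hχ hL hl hh hm hN hΔ (mem_filter.1 (mem_coe.1 hR)).2

end CoverSize

section LargeColorings

open Filter

universe u v

theorem random_colors_covered_by_available_cliques_general {ε : ℝ} (hε : 0 < ε) :
    ∃ N₀ : ℕ, ∀ (V : Type u) (C : Type v) [Fintype V] [Fintype C] [DecidableEq V] [DecidableEq C]
      (χ : Sym2 V → C), N₀ ≤ Fintype.card V → IsProperColoring χ → IsBalanced χ (1 / 100) →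
      (1 - ε) * 2 ^ Fintype.card C ≤ ({R | HasCliqueCover χ (Fintype.card V * Real.logb 2
        (Real.logb 2 (Fintype.card V)) / Real.logb 2 (Fintype.card V) ^ 2) R}.ncard : ℝ) := by
  have hlog := Real.tendsto_logb_atTop one_lt_two
  have hlarge : ∀ᶠ N : ℕ in atTop, 2 ≤ N ∧ 1000 ≤ Real.logb 2 N ∧ 10 ^ 8 / ε ≤ Real.logb 2 N ∧
      100 ≤ Real.logb 2 (Real.logb 2 N) ∧
      200 * Real.logb 2 N ^ 7 * (2 : ℝ) ^ (24 / 25 * Real.logb 2 N) ≤ 2 ^ Real.logb 2 N :=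
    (eventually_ge_atTop 2).and ((hlog.comp tendsto_natCast_atTop_atTop).eventually
      ((eventually_ge_atTop 1000).and ((eventually_ge_atTop (10 ^ 8 / ε)).and
        ((hlog.eventually_ge_atTop 100).and eventually_mul_pow_mul_two_rpow_le))))
  obtain ⟨N₀, hN₀⟩ := eventually_atTop.1 hlarge
  refine ⟨N₀, fun V C _ _ _ _ χ hV hχ hbal => ?_⟩
  obtain ⟨hV2, hL, hεL, hl, hN⟩ := hN₀ _ hV
  have hVpos : 0 < Fintype.card V := by omega
  have : Nonempty V := Fintype.card_pos_iff.1 hVpos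
  have : Nonempty C := this.map fun x => χ s(x, x)
  rw [Real.rpow_logb two_pos one_lt_two.ne' (by exact_mod_cast hVpos)] at hN
  exact hbal.one_sub_mul_two_pow_le_ncard_hasCliqueCover hχ hε hL hεL hl hN

end LargeColorings

section SymmetricMatrices

variable {N : ℕ} {C : Type} [DecidableEq C] {g : Fin N → Fin N → C} (hsymm : ∀ x y, g x y = g y x)

lemma isAvailable_lift_iff {R : Finset C} {A : Finset (Fin N)} :
    IsAvailable (Sym2.lift ⟨g, hsymm⟩) R A ↔
      (∀ x ∈ A, ∀ y ∈ A, ∀ z ∈ A, ∀ w ∈ A, x ≠ y → z ≠ w →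
        ¬(x = z ∧ y = w) → ¬(x = w ∧ y = z) → g x y ≠ g z w) ∧
      ∀ x ∈ A, ∀ y ∈ A, x ≠ y → g x y ∈ R := by
  refine and_congr ⟨fun h x hx y hy z hz w hw hxy hzw hne hne' heq => ?_, fun h => ?_⟩
    ⟨fun h x hx y hy hxy => h (mem_colorFinset.2 ⟨x, hx, y, hy, hxy, rfl⟩), fun h c hc => ?_⟩
  · have := h (mem_coe.2 (mem_cliqueEdges.2 ⟨hx, hy, hxy⟩))
      (mem_coe.2 (mem_cliqueEdges.2 ⟨hz, hw, hzw⟩)) heq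
    exact (Sym2.eq_iff.1 this).elim hne hne'
  · rintro ⟨x, y⟩ hxy ⟨z, w⟩ hzw heq
    obtain ⟨hx, hy, hxy⟩ := mem_cliqueEdges.1 (mem_coe.1 hxy)
    obtain ⟨hz, hw, hzw⟩ := mem_cliqueEdges.1 (mem_coe.1 hzw)
    by_contra hne
    exact h x hx y hy z hz w hw hxy hzw (fun h => hne (Sym2.eq_iff.2 (.inl h)))
      (fun h => hne (Sym2.eq_iff.2 (.inr h))) heq
  · obtain ⟨x, hx, y, hy, hxy, rfl⟩ := mem_colorFinset.1 hc
    exact h x hx y hy hxy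

lemma coe_colorFinset_lift (A : Finset (Fin N)) :
    (colorFinset (Sym2.lift ⟨g, hsymm⟩) A : Set C) = cliqueColors g A :=
  Set.ext fun _ => mem_colorFinset

lemma hasCliqueCover_lift_iff {B : ℝ} {R : Finset C} :
    HasCliqueCover (Sym2.lift ⟨g, hsymm⟩) B R ↔ ∃ 𝒞 : Finset (Finset (Fin N)), (#𝒞 : ℝ) ≤ B ∧
      (∀ A ∈ 𝒞,
        (∀ x ∈ A, ∀ y ∈ A, ∀ z ∈ A, ∀ w ∈ A, x ≠ y → z ≠ w →
          ¬(x = z ∧ y = w) → ¬(x = w ∧ y = z) → g x y ≠ g z w) ∧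
        ∀ x ∈ A, ∀ y ∈ A, x ≠ y → g x y ∈ R) ∧
      (R : Set C) = ⋃ A ∈ 𝒞, cliqueColors g A := by
  simp only [HasCliqueCover, isAvailable_lift_iff, ← coe_inj, coe_biUnion, coe_colorFinset_lift,
    mem_coe]

lemma card_colorPairs_lift (c : C) :
    #(colorPairs (Sym2.lift ⟨g, hsymm⟩) c) =
      2 * {p : Fin N × Fin N | p.1 < p.2 ∧ g p.1 p.2 = c}.ncard := by
  set E : Finset (Fin N × Fin N) := {p | p.1 < p.2 ∧ g p.1 p.2 = c} with hE
  have hmem : ∀ {x y}, (x, y) ∈ E ↔ x < y ∧ g x y = c := by simp [hE]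
  have hswap : ∀ {x y}, (x, y) ∈ E.map (Equiv.prodComm _ _).toEmbedding ↔ (y, x) ∈ E := by simp
  have hdisj : Disjoint E (E.map (Equiv.prodComm _ _).toEmbedding) :=
    disjoint_left.2 fun ⟨x, y⟩ h h' => (hmem.1 h).1.asymm (hmem.1 (hswap.1 h')).1
  have hunion : colorPairs (Sym2.lift ⟨g, hsymm⟩) c =
      E.disjUnion (E.map (Equiv.prodComm _ _).toEmbedding) hdisj := by
    ext ⟨x, y⟩
    rw [mem_disjUnion, hswap, hmem, hmem, mem_colorPairs, Sym2.lift_mk, hsymm y x, ← or_and_right,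
      ← ne_iff_lt_or_gt]
  rw [hunion, card_disjUnion, card_map, ← two_mul, ← Set.ncard_coe_finset, hE, coe_filter_univ]

lemma isBalanced_lift {δ : ℝ} (hg : ∀ c : C,
    (1 - δ) * (N / 2 : ℝ) ≤ ({p : Fin N × Fin N | p.1 < p.2 ∧ g p.1 p.2 = c}.ncard : ℝ) ∧
    ({p : Fin N × Fin N | p.1 < p.2 ∧ g p.1 p.2 = c}.ncard : ℝ) ≤ (1 + δ) * (N / 2 : ℝ)) :
    IsBalanced (Sym2.lift ⟨g, hsymm⟩) δ := by
  intro c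
  rw [card_colorPairs_lift, Fintype.card_fin, Nat.cast_mul, Nat.cast_ofNat]
  constructor <;> linarith [hg c]

end SymmetricMatrices

/-- For every `ε > 0` there exist `δ > 0` and `N₀` such that for every `N ≥ N₀`
and every properly edge-colored complete graph on `N` vertices (edge-coloring
`g`, colors of type `C`) in which every color appears on at least `(1−δ)·N/2`
and at most `(1+δ)·N/2` edges, the following holds. If `R` is a uniformly random
subset of the colors, then with probability at least `1 − ε` there is a
collection `𝒞` of at most `N·log₂ log₂ N / (log₂ N)²` available cliques whose
color sets have union exactly `R`. Here a set `A` of vertices is an available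
clique (for `R`) if its internal edges have pairwise distinct colors, all lying
in `R`; this includes single edges (two-element sets `A`) whose color lies
in `R`. -/
theorem random_colors_covered_by_available_cliques (ε : ℝ) (hε : 0 < ε) :
    ∃ δ : ℝ, 0 < δ ∧ ∃ N₀ : ℕ, ∀ N : ℕ, N₀ ≤ N →
      ∀ (C : Type) [Fintype C] [DecidableEq C],
      ∀ g : Fin N → Fin N → C,
        -- the coloring is symmetric (it colors undirected edges)
        (∀ x y : Fin N, g x y = g y x) →
        -- the coloring is proper
        (∀ x y z : Fin N, x ≠ y → x ≠ z → y ≠ z → g x y ≠ g x z) →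
        -- every color appears on between (1−δ)·N/2 and (1+δ)·N/2 edges
        (∀ c : C,
          (1 - δ) * (N / 2 : ℝ) ≤
            ({p : Fin N × Fin N | p.1 < p.2 ∧ g p.1 p.2 = c}.ncard : ℝ) ∧
          ({p : Fin N × Fin N | p.1 < p.2 ∧ g p.1 p.2 = c}.ncard : ℝ) ≤
            (1 + δ) * (N / 2 : ℝ)) →
        -- with probability ≥ 1 − ε over a uniformly random set R of colors ...
        (1 - ε) * 2 ^ (Fintype.card C) ≤
          ({R : Finset C | ∃ 𝒞 : Finset (Finset (Fin N)),
              -- ... there is a collection 𝒞 of at most N·log₂log₂N/(log₂N)² cliques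
              (𝒞.card : ℝ) ≤
                N * Real.logb 2 (Real.logb 2 N) / (Real.logb 2 N) ^ 2 ∧
              -- each member of 𝒞 is an available clique:
              (∀ A ∈ 𝒞,
                -- internal edges have pairwise distinct colors ...
                (∀ x ∈ A, ∀ y ∈ A, ∀ z ∈ A, ∀ w ∈ A, x ≠ y → z ≠ w →
                  ¬(x = z ∧ y = w) → ¬(x = w ∧ y = z) → g x y ≠ g z w) ∧
                -- ... all lying in R
                (∀ x ∈ A, ∀ y ∈ A, x ≠ y → g x y ∈ R)) ∧
              -- and R is exactly the union of the color sets of the cliques in 𝒞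
              (R : Set C) = ⋃ A ∈ 𝒞, cliqueColors g A}.ncard : ℝ) := by
  obtain ⟨N₀, hN₀⟩ := random_colors_covered_by_available_cliques_general hε
  refine ⟨1 / 100, by norm_num, N₀, fun N hN C _ _ g hsymm hproper hcard => ?_⟩
  simpa only [hasCliqueCover_lift_iff, Fintype.card_fin] using
    hN₀ (Fin N) C (Sym2.lift ⟨g, hsymm⟩) (by rwa [Fintype.card_fin]) hproper
      (isBalanced_lift hsymm hcard)
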